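/- arXiv:2005.06863 — 7 statements merged into one kernel-verified Lean document; each statement's English description precedes it below -/
import Mathlib

section
/- Let D ⊂ ℝ^d be a bounded set with closure K, 0 < γ ≤ 1, and let k ≥ 1 be an integer. For ℓ = 1,…,k let u_ℓ : K → ℝ have finite Hölder norm ‖u_ℓ‖_{C^{0,γ}} := max( sup_{y∈K} |u_ℓ(y)| , [u_ℓ]_γ ), where [u_ℓ]_γ := sup_{y≠y'∈K} |u_ℓ(y)−u_ℓ(y')|/‖y−y'‖^γ. Define the tensor-product function u : K^k → ℝ by u(y_1,…,y_k) := ∏_{ℓ=1}^k u_ℓ(y_ℓ). Then the mixed Hölder norm of u satisfies ‖u‖_{γ,mix} = ∏_{ℓ=1}^k ‖u_ℓ‖_{C^{0,γ}}. -/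
/-!
For a tensor product the mixed difference factorises: `Δ_T^h u (y)` is the product of the
one-variable differences `u_i (y_i + h_i) - u_i (y_i)` over `i ∈ T` and of the values `u_i (y_i)`
over `i ∉ T` (`mixedDiff_tensor`, a binomial expansion). Since `T` is recovered from `h` as the set
of indices with `h_i ≠ 0`, every quantity entering the mixed norm (a value of `u` being the case
`h = 0`) is a product `∏ i, q_i (y_i, h_i)`, where `q_i (y, h)` is `|u_i (y)|` if `h = 0` and the
Hölder quotient of `u_i` between `y` and `y + h` otherwise. The Hölder norm of `u_i` is the supremum
of `q_i`, so the claim says that in `[0,∞]` a finite product of suprema is the supremum of the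
products over all independent choices (`prod_iSup_le`).
-/

open scoped ENNReal NNReal
open Finset

/-- The `γ`-Hölder norm (sup norm and Hölder seminorm) of `u : K → ℝ` on
`K = closure D`, valued in `[0,∞]`. -/
noncomputable def holderNormR {d : ℕ} (D : Set (EuclideanSpace ℝ (Fin d))) (γ : ℝ)
    (u : EuclideanSpace ℝ (Fin d) → ℝ) : ℝ≥0∞ :=
  max (⨆ y ∈ closure D, (‖u y‖₊ : ℝ≥0∞))
    (⨆ y ∈ closure D, ⨆ y' ∈ closure D, ⨆ (_ : y ≠ y'),
      (‖u y - u y'‖₊ : ℝ≥0∞) / (‖y - y'‖₊ : ℝ≥0∞) ^ γ)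

/-- The mixed `γ`-Hölder norm of `u : K^k → ℝ` on `K = closure D`:
the max of the sup norm and of all mixed difference quotients, in `[0,∞]`. -/
noncomputable def mixedHolderNormR {d k : ℕ} (D : Set (EuclideanSpace ℝ (Fin d))) (γ : ℝ)
    (u : (Fin k → EuclideanSpace ℝ (Fin d)) → ℝ) : ℝ≥0∞ :=
  max (⨆ y : Fin k → EuclideanSpace ℝ (Fin d), ⨆ (_ : ∀ i, y i ∈ closure D),
      (‖u y‖₊ : ℝ≥0∞))
    (⨆ T : Finset (Fin k), ⨆ (_ : T.Nonempty),
      ⨆ y : Fin k → EuclideanSpace ℝ (Fin d), ⨆ h : Fin k → EuclideanSpace ℝ (Fin d),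
      ⨆ (_ : ∀ i, y i ∈ closure D), ⨆ (_ : ∀ i ∈ T, h i ≠ 0),
      ⨆ (_ : ∀ i ∉ T, h i = 0), ⨆ (_ : ∀ i, y i + h i ∈ closure D),
      (‖∑ S ∈ T.powerset, (-1 : ℝ) ^ (T.card - S.card) *
          u (fun i => y i + if i ∈ S then h i else 0)‖₊ : ℝ≥0∞) /
        ∏ i ∈ T, (‖h i‖₊ : ℝ≥0∞) ^ γ)

/-- The quantity contributed by a base point `p.1` and an increment `p.2` to the Hölder norm of `u`:
the size of `u` at `p.1` if the increment vanishes, the Hölder quotient between `p.1` and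
`p.1 + p.2` otherwise; it is `0` if one of the two points is outside `closure D`. -/
noncomputable def localQuot {d : ℕ} (D : Set (EuclideanSpace ℝ (Fin d))) (γ : ℝ)
    (u : EuclideanSpace ℝ (Fin d) → ℝ)
    (p : EuclideanSpace ℝ (Fin d) × EuclideanSpace ℝ (Fin d)) : ℝ≥0∞ :=
  open Classical in
  if p.1 ∈ closure D ∧ p.1 + p.2 ∈ closure D then
    if p.2 = 0 then (‖u p.1‖₊ : ℝ≥0∞)
    else (‖u (p.1 + p.2) - u p.1‖₊ : ℝ≥0∞) / (‖p.2‖₊ : ℝ≥0∞) ^ γ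
  else 0

theorem holderNormR_eq_iSup {d : ℕ} (D : Set (EuclideanSpace ℝ (Fin d))) (γ : ℝ)
    (u : EuclideanSpace ℝ (Fin d) → ℝ) :
    holderNormR D γ u = ⨆ p, localQuot D γ u p := by
  apply le_antisymm
  · refine max_le ?_ ?_
    · refine iSup₂_le fun y hy => ?_
      refine le_trans (le_of_eq ?_) (le_iSup _ (y, 0))
      simp [localQuot, hy]
    · refine iSup₂_le fun y hy => iSup₂_le fun y' hy' => iSup_le fun hne => ?_
      refine le_trans (le_of_eq ?_) (le_iSup _ (y', y - y'))
      simp [localQuot, hy, hy', sub_eq_zero, hne]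
  · refine iSup_le fun p => ?_
    obtain ⟨y, h⟩ := p
    by_cases hp : y ∈ closure D ∧ y + h ∈ closure D
    · by_cases h0 : h = 0
      · refine le_trans (le_of_eq ?_) (le_trans (le_iSup₂ y hp.1) (le_max_left _ _))
        simp [localQuot, hp.1, h0]
      · have hne : y + h ≠ y := by simpa using h0
        refine le_trans ?_ (le_max_right _ _)
        refine le_iSup₂_of_le (y + h) hp.2 <| le_iSup₂_of_le y hp.1 <|
          le_iSup_of_le hne (le_of_eq ?_)
        simp [localQuot, hp.1, hp.2, h0]
    · simp [localQuot, hp]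

/-- A finite product of suprema in `[0,∞]` is bounded by any bound of the products over all
choices; the factor `c` makes the induction over `s` work. -/
theorem prod_iSup_le {ι α : Type*} (f : ι → α → ℝ≥0∞) (M : ℝ≥0∞) (s : Finset ι) (c : ℝ≥0∞)
    (H : ∀ j : ι → α, c * ∏ i ∈ s, f i (j i) ≤ M) [Nonempty α] :
    c * ∏ i ∈ s, ⨆ a, f i a ≤ M := by
  classical
  induction s using Finset.induction_on generalizing c with
  | empty => simpa using H
  | insert b s hb ih =>
    rw [Finset.prod_insert hb, ← mul_assoc, ENNReal.mul_iSup, ENNReal.iSup_mul]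
    refine iSup_le fun a => ih _ fun j => ?_
    have := H (Function.update j b a)
    rw [Finset.prod_insert hb, Function.update_self, ← mul_assoc] at this
    convert this using 2
    refine Finset.prod_congr rfl fun i hi => ?_
    rw [Function.update_of_ne (ne_of_mem_of_not_mem hi hb)]

theorem mixedDiff_tensor {d k : ℕ} (u : Fin k → EuclideanSpace ℝ (Fin d) → ℝ)
    (T : Finset (Fin k)) (y h : Fin k → EuclideanSpace ℝ (Fin d)) :
    ∑ S ∈ T.powerset, (-1 : ℝ) ^ (T.card - S.card) *
        ∏ i, u i (y i + if i ∈ S then h i else 0) =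
      (∏ i ∈ T, (u i (y i + h i) - u i (y i))) * ∏ i ∈ univ \ T, u i (y i) := by
  simp_rw [sub_eq_add_neg]
  rw [Finset.prod_add, Finset.sum_mul]
  refine Finset.sum_congr rfl fun S hS => ?_
  have hST : S ⊆ T := Finset.mem_powerset.1 hS
  rw [Finset.prod_neg, Finset.card_sdiff_of_subset hST,
    ← Finset.prod_sdiff (Finset.subset_univ T), ← Finset.prod_sdiff hST]
  have h1 : ∏ i ∈ univ \ T, u i (y i + if i ∈ S then h i else 0) = ∏ i ∈ univ \ T, u i (y i) :=
    Finset.prod_congr rfl fun i hi => by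
      rw [if_neg fun hS => (Finset.mem_sdiff.1 hi).2 (hST hS), add_zero]
  have h2 : ∏ i ∈ T \ S, u i (y i + if i ∈ S then h i else 0) = ∏ i ∈ T \ S, u i (y i) :=
    Finset.prod_congr rfl fun i hi => by
      rw [if_neg (Finset.mem_sdiff.1 hi).2, add_zero]
  have h3 : ∏ i ∈ S, u i (y i + if i ∈ S then h i else 0) = ∏ i ∈ S, u i (y i + h i) :=
    Finset.prod_congr rfl fun i hi => by rw [if_pos hi]
  rw [h1, h2, h3]
  ring

theorem mixedQuot_tensor {d k : ℕ} (D : Set (EuclideanSpace ℝ (Fin d))) (γ : ℝ)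
    (u : Fin k → EuclideanSpace ℝ (Fin d) → ℝ)
    (T : Finset (Fin k)) (y h : Fin k → EuclideanSpace ℝ (Fin d))
    (hy : ∀ i, y i ∈ closure D) (hT : ∀ i ∈ T, h i ≠ 0) (hT' : ∀ i ∉ T, h i = 0)
    (hyh : ∀ i, y i + h i ∈ closure D) :
    (‖∑ S ∈ T.powerset, (-1 : ℝ) ^ (T.card - S.card) *
        ∏ i, u i (y i + if i ∈ S then h i else 0)‖₊ : ℝ≥0∞) /
      ∏ i ∈ T, (‖h i‖₊ : ℝ≥0∞) ^ γ = ∏ i, localQuot D γ (u i) (y i, h i) := by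
  have e1 : ∏ i ∈ T, localQuot D γ (u i) (y i, h i) =
      (∏ i ∈ T, (‖u i (y i + h i) - u i (y i)‖₊ : ℝ≥0∞)) / ∏ i ∈ T, (‖h i‖₊ : ℝ≥0∞) ^ γ := by
    rw [← ENNReal.prod_div_distrib_of_ne_zero]
    · exact Finset.prod_congr rfl fun i hi => by simp [localQuot, hy, hyh, hT i hi]
    · intro i hi
      have : (‖h i‖₊ : ℝ≥0∞) ≠ 0 := by simpa using hT i hi
      exact (ENNReal.rpow_pos (pos_iff_ne_zero.2 this) ENNReal.coe_ne_top).ne'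
  have e2 : ∏ i ∈ univ \ T, localQuot D γ (u i) (y i, h i) =
      ∏ i ∈ univ \ T, (‖u i (y i)‖₊ : ℝ≥0∞) :=
    Finset.prod_congr rfl fun i hi => by
      simp [localQuot, hy, hT' i (Finset.mem_sdiff.1 hi).2]
  rw [mixedDiff_tensor, ← Finset.prod_sdiff (Finset.subset_univ T), e1, e2, nnnorm_mul,
    nnnorm_prod, nnnorm_prod, ENNReal.coe_mul, ENNReal.ofNNReal_finsetProd, ENNReal.ofNNReal_finsetProd,
    mul_comm, mul_div_assoc]

/-- the mixed Hölder norm of a tensor product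
`u(y_1,…,y_k) = ∏_ℓ u_ℓ(y_ℓ)` equals the product of the Hölder norms of the factors. -/
theorem stmt_4 {d k : ℕ} (hk : 1 ≤ k) (D : Set (EuclideanSpace ℝ (Fin d)))
    (hD : Bornology.IsBounded D)
    (γ : ℝ) (hγ0 : 0 < γ) (hγ1 : γ ≤ 1)
    (u : Fin k → EuclideanSpace ℝ (Fin d) → ℝ)
    (hu : ∀ ℓ, holderNormR D γ (u ℓ) < ⊤) :
    mixedHolderNormR D γ (fun y => ∏ ℓ, u ℓ (y ℓ)) = ∏ ℓ, holderNormR D γ (u ℓ) := by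
  have hsup : ∏ ℓ, holderNormR D γ (u ℓ) = ∏ ℓ, ⨆ p, localQuot D γ (u ℓ) p :=
    Finset.prod_congr rfl fun ℓ _ => holderNormR_eq_iSup D γ (u ℓ)
  have hle : ∀ y h : Fin k → EuclideanSpace ℝ (Fin d),
      ∏ ℓ, localQuot D γ (u ℓ) (y ℓ, h ℓ) ≤ ∏ ℓ, ⨆ p, localQuot D γ (u ℓ) p := fun y h =>
    Finset.prod_le_prod' fun ℓ _ => le_iSup (localQuot D γ (u ℓ)) (y ℓ, h ℓ)
  have hval : ∀ y : Fin k → EuclideanSpace ℝ (Fin d), (∀ i, y i ∈ closure D) →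
      (‖∏ ℓ, u ℓ (y ℓ)‖₊ : ℝ≥0∞) = ∏ ℓ, localQuot D γ (u ℓ) (y ℓ, 0) := fun y hy => by
    rw [nnnorm_prod, ENNReal.ofNNReal_finsetProd]
    exact Finset.prod_congr rfl fun i _ => by simp [localQuot, hy]
  rw [hsup]
  apply le_antisymm
  · refine max_le ?_ ?_
    · refine iSup₂_le fun y hy => ?_
      rw [hval y hy]
      exact hle y fun _ => 0
    · refine iSup₂_le fun T _ => iSup₂_le fun y h => iSup₂_le fun hy hT =>
        iSup₂_le fun hT' hyh => ?_
      rw [mixedQuot_tensor D γ u T y h hy hT hT' hyh]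
      exact hle y h
  · rw [← one_mul (∏ ℓ, ⨆ p, localQuot D γ (u ℓ) p)]
    refine prod_iSup_le _ _ _ _ fun j => ?_
    rw [one_mul]
    by_cases hj : ∀ i, (j i).1 ∈ closure D ∧ (j i).1 + (j i).2 ∈ closure D
    · by_cases h0 : ∀ i, (j i).2 = 0
      · refine le_trans (le_of_eq ?_)
          (le_trans (le_iSup₂ (fun i => (j i).1) fun i => (hj i).1) (le_max_left _ _))
        rw [hval _ fun i => (hj i).1]
        exact Finset.prod_congr rfl fun i _ => by rw [← h0 i]
      · classical
        push Not at h0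
        obtain ⟨i₀, hi₀⟩ := h0
        -- The index set of the mixed difference is the support of the increments.
        let T : Finset (Fin k) := univ.filter fun i => (j i).2 ≠ 0
        have hTne : T.Nonempty := ⟨i₀, by simp [T, hi₀]⟩
        have hT : ∀ i ∈ T, (j i).2 ≠ 0 := fun i hi => by simpa [T] using hi
        have hT' : ∀ i ∉ T, (j i).2 = 0 := fun i hi => by simpa [T] using hi
        refine le_trans ?_ (le_max_right _ _)
        refine le_iSup₂_of_le T hTne <| le_iSup₂_of_le (fun i => (j i).1) (fun i => (j i).2) <|
          le_iSup₂_of_le (fun i => (hj i).1) hT <|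
          le_iSup₂_of_le hT' (fun i => (hj i).2) (le_of_eq ?_)
        exact (mixedQuot_tensor D γ u T (fun i => (j i).1) (fun i => (j i).2)
          (fun i => (hj i).1) hT hT' fun i => (hj i).2).symm
    · rw [not_forall] at hj
      obtain ⟨i, hi⟩ := hj
      rw [Finset.prod_eq_zero (Finset.mem_univ i) (by simp only [localQuot, if_neg hi])]
      exact zero_le
end

section
/- Let D ⊂ ℝ^d be a nonempty bounded convex open set with closure K, let 0 < γ ≤ 1 and let p be a real number with p > 2d/γ. There exists a constant C > 0, depending only on d, p, γ and D, such that for every continuous function f : K × K → ℝ with finite L^p-valued Hölder seminorm [f] := sup_{y ≠ y' ∈ K} (∫_D |f(x,y) − f(x,y')|^p dx)^{1/p} / ‖y − y'‖^γ, the diagonal trace x ↦ f(x,x) satisfies (∫_D |f(x,x)|^p dx)^{1/p} ≤ C · max{ sup_{y∈K} (∫_D |f(x,y)|^p dx)^{1/p} , [f] }. -/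
open MeasureTheory

/-!
The diagonal value `f(x,x)` is reached by chaining through random points approaching `x`. For
`z ∈ D` put `T_k(x,z) = x + 2^{-k}(z - x)`, which lies in `D` by convexity, and let
`F_k(x,z) = f(x, T_k(x,z))`. Then `F_0(x,z) = f(x,z)` has `L^p(D × D)` norm controlled by the sup
bound, and `F_k(x,z) → f(x,x)` by continuity, so by Fatou it is enough to bound `‖F_k‖_p`
uniformly in `k`.

The step from `F_k` to `F_{k+1}` uses two independent points: on `D × D × D` one has
`‖F_{k+1}(x,z')‖ ≤ ‖F_k(x,z)‖ + ‖F_k(x,z) - F_{k+1}(x,z')‖`. In the last term, substituting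
`y = T_k(x,z)`, `y' = T_{k+1}(x,z')` for fixed `x` costs a Jacobian `2^{kd} · 2^{(k+1)d}` and makes
`y, y'` independent of `x`; Tonelli and the Hölder bound, with `‖y - y'‖ ≲ 2^{-k}`, bound its
`p`-th power by a multiple of `2^{2kd} 2^{-kγp}` (`lintegral_increment_le`). As `p > 2d/γ`, the
norms of the increments form a geometric series (`lintegral_diagonal_le`).

In dimension `0`, where `p` may be less than `1` and the triangle inequality may fail, `D` is a
single point and the diagonal is a section of `f`.
-/
open Filter Topology
open scoped ENNReal

/-- The homothety with centre `x` and ratio `t`, applied to `z`. -/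
def contractTo {E : Type*} [AddCommGroup E] [Module ℝ E] (t : ℝ) (x z : E) : E :=
  x + t • (z - x)

lemma contractTo_mem {E : Type*} [AddCommGroup E] [Module ℝ E] {D : Set E}
    (hconv : Convex ℝ D) {t : ℝ} (ht0 : 0 ≤ t) (ht1 : t ≤ 1) {x z : E} (hx : x ∈ D)
    (hz : z ∈ D) : contractTo t x z ∈ D :=
  hconv.add_smul_sub_mem hx hz ⟨ht0, ht1⟩

/-- Change of variables under the homothety with centre `x ∈ D` and ratio `t ≤ 1`, which maps the
convex set `D` into itself; enlarging the image to all of `D` gives an inequality. -/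
lemma lintegral_contractTo_le {d : ℕ} {D : Set (EuclideanSpace ℝ (Fin d))}
    (hmeas : MeasurableSet D) (hconv : Convex ℝ D) {t : ℝ} (ht0 : 0 < t) (ht1 : t ≤ 1)
    {x : EuclideanSpace ℝ (Fin d)} (hx : x ∈ D) {h : EuclideanSpace ℝ (Fin d) → ℝ≥0∞}
    (hh : Measurable h) :
    ∫⁻ z in D, h (contractTo t x z) ≤ ENNReal.ofReal ((t ^ d)⁻¹) * ∫⁻ y in D, h y := by
  have hind : Measurable (D.indicator h) := hh.indicator hmeas
  calc ∫⁻ z in D, h (contractTo t x z)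
      ≤ ∫⁻ z in D, D.indicator h (contractTo t x z) := by
        refine setLIntegral_mono (by unfold contractTo; fun_prop) fun z hz => ?_
        rw [Set.indicator_of_mem (contractTo_mem hconv ht0.le ht1 hx hz)]
    _ ≤ ∫⁻ z, D.indicator h (contractTo t x z) := setLIntegral_le_lintegral _ _
    _ = ∫⁻ z, D.indicator h (x + t • z) :=
        lintegral_sub_right_eq_self (fun z => D.indicator h (x + t • z)) x
    _ = ∫⁻ w, D.indicator h (x + w) ∂(Measure.map (t • ·) volume) := by
        rw [lintegral_map (by fun_prop) (by fun_prop)]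
    _ = ENNReal.ofReal ((t ^ d)⁻¹) * ∫⁻ w, D.indicator h (x + w) := by
        rw [Measure.map_addHaar_smul _ ht0.ne', lintegral_smul_measure, smul_eq_mul]
        simp [abs_of_pos ht0]
    _ = ENNReal.ofReal ((t ^ d)⁻¹) * ∫⁻ y in D, h y := by
        rw [lintegral_add_left_eq_self, lintegral_indicator hmeas]

/-- The increment estimate: moving the second argument of `g` to homothetic images of two
independent points `z, z'` costs the two Jacobians, after which the evaluation points `y, y'` no
longer depend on `x` and the bound `A` on `L^p` increments at distance at most `r` applies. -/
lemma lintegral_increment_le {d : ℕ} {D : Set (EuclideanSpace ℝ (Fin d))}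
    (hmeas : MeasurableSet D) (hconv : Convex ℝ D) {p : ℝ}
    {g : EuclideanSpace ℝ (Fin d) × EuclideanSpace ℝ (Fin d) → ℝ} (hg : Measurable g)
    {r : ℝ} {A : ℝ≥0∞}
    (hA : ∀ y ∈ D, ∀ y' ∈ D, ‖y - y'‖ ≤ r →
      ∫⁻ x in D, ‖g (x, y) - g (x, y')‖ₑ ^ p ≤ A)
    {s t : ℝ} (hs0 : 0 < s) (hs1 : s ≤ 1) (ht0 : 0 < t) (ht1 : t ≤ 1)
    (hr : ∀ x ∈ D, ∀ z ∈ D, ∀ z' ∈ D, ‖contractTo s x z - contractTo t x z'‖ ≤ r) :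
    ∫⁻ x in D, ∫⁻ z in D, ∫⁻ z' in D,
        ‖g (x, contractTo s x z) - g (x, contractTo t x z')‖ₑ ^ p
      ≤ ENNReal.ofReal ((s ^ d)⁻¹) * ENNReal.ofReal ((t ^ d)⁻¹) *
        (volume D * volume D * A) := by
  set S : Set (EuclideanSpace ℝ (Fin d) × EuclideanSpace ℝ (Fin d)) :=
    {q | ‖q.1 - q.2‖ ≤ r} with hS
  have hSm : MeasurableSet S := measurableSet_le (by fun_prop) measurable_const
  -- The cut-off keeps the constraint `‖y - y'‖ ≤ r` once the evaluation points range over all of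
  -- `D × D`.
  obtain ⟨H, hH⟩ : ∃ H : EuclideanSpace ℝ (Fin d) → EuclideanSpace ℝ (Fin d) →
      EuclideanSpace ℝ (Fin d) → ℝ≥0∞, ∀ x y y', H x y y' =
    S.indicator (fun _ => 1) (y, y') * ‖g (x, y) - g (x, y')‖ₑ ^ p := ⟨_, fun _ _ _ => rfl⟩
  have hone : Measurable (S.indicator (fun _ => (1 : ℝ≥0∞))) := measurable_const.indicator hSm
  have hHm : Measurable fun q : EuclideanSpace ℝ (Fin d) × EuclideanSpace ℝ (Fin d) ×
      EuclideanSpace ℝ (Fin d) => H q.1 q.2.1 q.2.2 := by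
    simp only [hH]
    fun_prop
  set cs := ENNReal.ofReal ((s ^ d)⁻¹)
  set ct := ENNReal.ofReal ((t ^ d)⁻¹)
  have inner : ∀ x ∈ D, ∫⁻ z in D, ∫⁻ z' in D,
        ‖g (x, contractTo s x z) - g (x, contractTo t x z')‖ₑ ^ p
      ≤ cs * (ct * ∫⁻ y in D, ∫⁻ y' in D, H x y y') := by
    intro x hx
    have hm1 : Measurable fun y => ∫⁻ y' in D, H x y y' := by
      refine Measurable.lintegral_prod_right
        (f := fun y y' => H x y y') ?_
      exact hHm.comp (measurable_const.prodMk measurable_id)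
    calc ∫⁻ z in D, ∫⁻ z' in D,
          ‖g (x, contractTo s x z) - g (x, contractTo t x z')‖ₑ ^ p
        = ∫⁻ z in D, ∫⁻ z' in D, H x (contractTo s x z) (contractTo t x z') := by
          refine setLIntegral_congr_fun hmeas fun z hz => ?_
          refine setLIntegral_congr_fun hmeas fun z' hz' => ?_
          have : (contractTo s x z, contractTo t x z') ∈ S := hr x hx z hz z' hz'
          simp only [hH, Set.indicator_of_mem this, one_mul]
      _ ≤ ∫⁻ z in D, ct * ∫⁻ y' in D, H x (contractTo s x z) y' := by
          refine lintegral_mono fun z => ?_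
          exact lintegral_contractTo_le hmeas hconv ht0 ht1 hx
            (hHm.comp (measurable_const.prodMk (measurable_const.prodMk measurable_id)))
      _ ≤ cs * ∫⁻ y in D, ct * ∫⁻ y' in D, H x y y' :=
          lintegral_contractTo_le hmeas hconv hs0 hs1 hx (hm1.const_mul ct)
      _ = _ := by rw [lintegral_const_mul _ hm1]
  have hm3 : ∀ y, Measurable (Function.uncurry fun x y' => H x y y') := fun y =>
    hHm.comp (measurable_fst.prodMk (measurable_const.prodMk measurable_snd))
  have hm2 : Measurable (Function.uncurry fun x y => ∫⁻ y' in D, H x y y') := by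
    refine Measurable.lintegral_prod_right
        (f := fun (q : EuclideanSpace ℝ (Fin d) × EuclideanSpace ℝ (Fin d)) y' => H q.1 q.2 y') ?_
    exact hHm.comp ((measurable_fst.comp measurable_fst).prodMk
      ((measurable_snd.comp measurable_fst).prodMk measurable_snd))
  calc _ ≤ ∫⁻ x in D, cs * (ct * ∫⁻ y in D, ∫⁻ y' in D, H x y y') :=
        setLIntegral_mono' hmeas inner
    _ = cs * ct * ∫⁻ x in D, ∫⁻ y in D, ∫⁻ y' in D, H x y y' := by
        have := hm2.lintegral_prod_right (ν := volume.restrict D)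
        rw [lintegral_const_mul _ (this.const_mul ct), lintegral_const_mul _ this, mul_assoc]
    _ = cs * ct * ∫⁻ y in D, ∫⁻ y' in D, ∫⁻ x in D, H x y y' := by
        rw [lintegral_lintegral_swap hm2.aemeasurable]
        congr 1
        refine lintegral_congr fun y => ?_
        rw [lintegral_lintegral_swap (hm3 y).aemeasurable]
    _ ≤ cs * ct * ∫⁻ y in D, ∫⁻ y' in D, A := by
        gcongr 1
        refine setLIntegral_mono' hmeas fun y hy => ?_
        refine setLIntegral_mono' hmeas fun y' hy' => ?_
        by_cases hyy : (y, y') ∈ S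
        · simpa only [hH, Set.indicator_of_mem hyy, one_mul] using hA y hy y' hy' hyy
        · simp [hH, Set.indicator_of_notMem hyy]
    _ = _ := by
        simp only [lintegral_const, Measure.restrict_apply_univ]
        ring

/-- The bound of `lintegral_increment_le` for the ratios `2^{-k}`, `2^{-(k+1)}` is the `p`-th power
of a term of a geometric progression with ratio `2^{2d/p - γ}`. -/
lemma increment_constant_eq {d : ℕ} {γ p R M : ℝ} (hp : 0 < p) (hR : 0 < R) (hM : 0 ≤ M)
    (k : ℕ) :
    ((((1 / 2 : ℝ) ^ (k + 1)) ^ d)⁻¹ * (((1 / 2 : ℝ) ^ k) ^ d)⁻¹) *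
        (M * (2 * R * (1 / 2 : ℝ) ^ k) ^ γ) ^ p
      = (M * ((2 : ℝ) ^ (d / p : ℝ) * (2 * R) ^ γ * ((2 : ℝ) ^ (2 * d / p - γ)) ^ k)) ^ p := by
  have h2 : (0 : ℝ) < 2 := two_pos
  have e1 : (((1 / 2 : ℝ) ^ (k + 1)) ^ d)⁻¹ = (2 : ℝ) ^ (((k : ℝ) + 1) * d) := by
    rw [← pow_mul, one_div, inv_pow, inv_inv, ← Real.rpow_natCast]
    push_cast
    rfl
  have e2 : (((1 / 2 : ℝ) ^ k) ^ d)⁻¹ = (2 : ℝ) ^ ((k : ℝ) * d) := by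
    rw [← pow_mul, one_div, inv_pow, inv_inv, ← Real.rpow_natCast]
    push_cast
    rfl
  have e3 : (1 / 2 : ℝ) ^ k = (2 : ℝ) ^ (-(k : ℝ)) := by
    rw [Real.rpow_neg h2.le, Real.rpow_natCast, one_div, inv_pow]
  rw [e1, e2, e3, ← Real.rpow_natCast ((2 : ℝ) ^ (2 * d / p - γ)) k]
  have hRp : 0 < (2 * R) ^ γ := by positivity
  have l : (M * (2 * R * (2 : ℝ) ^ (-(k : ℝ))) ^ γ) ^ p
      = M ^ p * (((2 * R) ^ γ) ^ p * (2 : ℝ) ^ (-(k : ℝ) * γ * p)) := by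
    rw [Real.mul_rpow hM (by positivity),
      Real.mul_rpow (x := 2 * R) (by positivity) (by positivity),
      Real.mul_rpow hRp.le (by positivity), ← Real.rpow_mul h2.le, ← Real.rpow_mul h2.le]
  have r : (M * ((2 : ℝ) ^ (d / p : ℝ) * (2 * R) ^ γ * ((2 : ℝ) ^ (2 * d / p - γ)) ^ (k : ℝ))) ^ p
      = M ^ p * ((2 : ℝ) ^ (d / p * p) * ((2 * R) ^ γ) ^ p *
        (2 : ℝ) ^ ((2 * d / p - γ) * k * p)) := by
    rw [Real.mul_rpow hM (by positivity), Real.mul_rpow (by positivity) (by positivity),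
      Real.mul_rpow (by positivity) hRp.le, ← Real.rpow_mul h2.le, ← Real.rpow_mul h2.le,
      ← Real.rpow_mul h2.le]
  rw [l, r]
  have : (2 : ℝ) ^ (((k : ℝ) + 1) * d) * (2 : ℝ) ^ ((k : ℝ) * d) * (2 : ℝ) ^ (-(k : ℝ) * γ * p)
      = (2 : ℝ) ^ (d / p * p) * (2 : ℝ) ^ ((2 * d / p - γ) * k * p) := by
    rw [← Real.rpow_add h2, ← Real.rpow_add h2, ← Real.rpow_add h2]
    congr 1
    field_simp
    ring
  linear_combination (M ^ p * ((2 * R) ^ γ) ^ p) * this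

lemma norm_contractTo_sub_le {E : Type*} [NormedAddCommGroup E] [NormedSpace ℝ E] {D : Set E}
    {R : ℝ} (hR : ∀ x ∈ D, ∀ z ∈ D, ‖z - x‖ ≤ R) {t : ℝ} (ht : 0 ≤ t) {x z z' : E}
    (hx : x ∈ D) (hz : z ∈ D) (hz' : z' ∈ D) :
    ‖contractTo (t / 2) x z - contractTo t x z'‖ ≤ 2 * R * t := by
  have h1 := hR x hx z hz
  have h2 := hR x hx z' hz'
  have h0 : 0 ≤ R := (norm_nonneg _).trans h1
  calc ‖contractTo (t / 2) x z - contractTo t x z'‖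
      = ‖(t / 2) • (z - x) - t • (z' - x)‖ := by simp [contractTo]
    _ ≤ ‖(t / 2) • (z - x)‖ + ‖t • (z' - x)‖ := norm_sub_le _ _
    _ = t / 2 * ‖z - x‖ + t * ‖z' - x‖ := by
        rw [norm_smul, norm_smul, Real.norm_of_nonneg ht, Real.norm_of_nonneg (by positivity)]
    _ ≤ t / 2 * R + t * R := by gcongr
    _ ≤ 2 * R * t := by nlinarith [mul_nonneg ht h0]

lemma lintegral_triple {α : Type*} [MeasurableSpace α] (μ : Measure α) [SFinite μ]
    {φ : α × α × α → ℝ≥0∞} (hφ : Measurable φ) :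
    ∫⁻ q, φ q ∂(μ.prod (μ.prod μ)) = ∫⁻ x, ∫⁻ z, ∫⁻ z', φ (x, z, z') ∂μ ∂μ ∂μ := by
  rw [lintegral_prod _ hφ.aemeasurable]
  refine lintegral_congr fun x => ?_
  rw [lintegral_prod]
  exact (hφ.comp measurable_prodMk_left).aemeasurable

lemma eLpNorm_ofReal_le_iff {α : Type*} [MeasurableSpace α] {μ : Measure α} {h : α → ℝ}
    {p : ℝ} (hp : 0 < p) {A : ℝ≥0∞} :
    eLpNorm h (ENNReal.ofReal p) μ ≤ A ↔ ∫⁻ x, ‖h x‖ₑ ^ p ∂μ ≤ A ^ p := by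
  rw [eLpNorm_eq_lintegral_rpow_enorm_toReal (by simpa using hp) ENNReal.ofReal_ne_top,
    ENNReal.toReal_ofReal hp.le, one_div, ENNReal.rpow_inv_le_iff hp]

set_option maxHeartbeats 1000000 in
/-- The trace bound in `ℝ≥0∞`-valued form, for a globally measurable `g` that is continuous at the
diagonal along homotheties. -/
theorem lintegral_diagonal_le {d : ℕ} {D : Set (EuclideanSpace ℝ (Fin d))}
    (hmeas : MeasurableSet D) (hconv : Convex ℝ D) (hV0 : volume D ≠ 0) (hV : volume D ≠ ∞)
    {R : ℝ} (hR0 : 0 < R) (hR : ∀ x ∈ D, ∀ z ∈ D, ‖z - x‖ ≤ R)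
    {γ p : ℝ} (hγ : 0 < γ) (hp1 : 1 ≤ p) (hp : 2 * d / p < γ)
    {g : EuclideanSpace ℝ (Fin d) × EuclideanSpace ℝ (Fin d) → ℝ} (hg : Measurable g)
    {M : ℝ} (hM : 0 ≤ M)
    (hlim : ∀ x ∈ D, ∀ z ∈ D,
      Tendsto (fun k : ℕ => g (x, contractTo ((1 / 2 : ℝ) ^ k) x z)) atTop (𝓝 (g (x, x))))
    (h1 : ∀ y ∈ D, ∫⁻ x in D, ‖g (x, y)‖ₑ ^ p ≤ ENNReal.ofReal M ^ p)
    (h2 : ∀ y ∈ D, ∀ y' ∈ D,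
      ∫⁻ x in D, ‖g (x, y) - g (x, y')‖ₑ ^ p ≤ ENNReal.ofReal (M * ‖y - y'‖ ^ γ) ^ p) :
    ∫⁻ x in D, ‖g (x, x)‖ₑ ^ p ≤ ENNReal.ofReal (M * (1 + (2 : ℝ) ^ (d / p : ℝ) * (2 * R) ^ γ *
      (1 - (2 : ℝ) ^ (2 * d / p - γ))⁻¹)) ^ p := by
  have hp0 : 0 < p := by linarith
  set c : ℝ := (2 : ℝ) ^ (d / p : ℝ) * (2 * R) ^ γ with hc
  set θ : ℝ := (2 : ℝ) ^ (2 * d / p - γ) with hθ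
  have hc0 : 0 ≤ c := by positivity
  have hθ0 : 0 ≤ θ := by positivity
  have hθ1 : θ < 1 := Real.rpow_lt_one_of_one_lt_of_neg one_lt_two (by linarith)
  set V := volume D with hVdef
  set μ := (volume : Measure (EuclideanSpace ℝ (Fin d))).restrict D with hμ
  have hμV : μ Set.univ = V := by simp [hμ, hVdef]
  set ν := μ.prod (μ.prod μ) with hν
  set P := ENNReal.ofReal p
  have hP1 : 1 ≤ P := by simpa [P] using hp1
  have hτ : ∀ t : ℝ, Measurable fun q : EuclideanSpace ℝ (Fin d) × EuclideanSpace ℝ (Fin d) =>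
      g (q.1, contractTo t q.1 q.2) := fun t => by
    unfold contractTo
    fun_prop
  -- `G k` and `H k` are the same function of `(x, z)`, resp. `(x, z')`, viewed on `D × D × D`.
  obtain ⟨G, hG⟩ : ∃ G : ℕ → EuclideanSpace ℝ (Fin d) × EuclideanSpace ℝ (Fin d) ×
      EuclideanSpace ℝ (Fin d) → ℝ, ∀ k q, G k q =
        g (q.1, contractTo ((1 / 2 : ℝ) ^ k) q.1 q.2.1) := ⟨_, fun _ _ => rfl⟩
  obtain ⟨H, hH⟩ : ∃ H : ℕ → EuclideanSpace ℝ (Fin d) × EuclideanSpace ℝ (Fin d) ×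
      EuclideanSpace ℝ (Fin d) → ℝ, ∀ k q, H k q =
        g (q.1, contractTo ((1 / 2 : ℝ) ^ k) q.1 q.2.2) := ⟨_, fun _ _ => rfl⟩
  have hGm : ∀ k, Measurable (G k) := fun k => by
    rw [show G k = _ from funext (hG k)]
    exact (hτ _).comp (measurable_fst.prodMk (measurable_fst.comp measurable_snd))
  have hHm : ∀ k, Measurable (H k) := fun k => by
    rw [show H k = _ from funext (hH k)]
    exact (hτ _).comp (measurable_fst.prodMk (measurable_snd.comp measurable_snd))
  have hGH : ∀ k, eLpNorm (G k) P ν = eLpNorm (H k) P ν := by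
    intro k
    have hmp : MeasurePreserving (Prod.map id Prod.swap) ν ν :=
      (MeasurePreserving.id μ).prod Measure.measurePreserving_swap
    rw [← eLpNorm_comp_measurePreserving (hHm k).aestronglyMeasurable hmp]
    congr 1
    funext q
    simp [hG, hH]
  -- The norm on `D × D × D` of a constant-in-`(z, z')` function is `B` times its norm on `D`.
  set B : ℝ≥0∞ := (V * V) ^ (1 / p) with hB
  have hBp : B ^ p = V * V := by
    rw [hB, ← ENNReal.rpow_mul, one_div_mul_cancel hp0.ne', ENNReal.rpow_one]
  have base : eLpNorm (G 0) P ν ≤ B * ENNReal.ofReal M := by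
    rw [eLpNorm_ofReal_le_iff hp0, ENNReal.mul_rpow_of_nonneg _ _ hp0.le, hBp,
      lintegral_triple μ ((hGm 0).enorm.pow_const p)]
    simp only [hG, pow_zero, contractTo, one_smul, add_sub_cancel, lintegral_const, hμV]
    have hm : Measurable (Function.uncurry
        fun x z : EuclideanSpace ℝ (Fin d) => ‖g (x, z)‖ₑ ^ p * V) :=
      (hg.enorm.pow_const p).mul_const V
    rw [lintegral_lintegral_swap hm.aemeasurable]
    calc _ ≤ ∫⁻ z in D, ENNReal.ofReal M ^ p * V := by
          refine setLIntegral_mono' hmeas fun z hz => ?_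
          have hgz : Measurable fun x => ‖g (x, z)‖ₑ ^ p := by fun_prop
          rw [lintegral_mul_const _ hgz]
          gcongr
          exact h1 z hz
      _ = _ := by rw [lintegral_const, hμV]; ring
  have incr : ∀ k, eLpNorm (G k - H (k + 1)) P ν ≤ B * ENNReal.ofReal (M * (c * θ ^ k)) := by
    intro k
    have hmm : Measurable fun q => ‖(G k - H (k + 1)) q‖ₑ ^ p :=
      ((hGm k).sub (hHm (k + 1))).enorm.pow_const p
    have ht0 : (0 : ℝ) < (1 / 2) ^ k := by positivity
    have ht1 : (1 / 2 : ℝ) ^ k ≤ 1 := pow_le_one₀ (by norm_num) (by norm_num)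
    have hs0 : (0 : ℝ) < (1 / 2) ^ (k + 1) := by positivity
    have hs1 : (1 / 2 : ℝ) ^ (k + 1) ≤ 1 := pow_le_one₀ (by norm_num) (by norm_num)
    rw [eLpNorm_ofReal_le_iff hp0, ENNReal.mul_rpow_of_nonneg _ _ hp0.le, hBp,
      lintegral_triple μ hmm]
    simp only [hG, hH, Pi.sub_apply]
    refine (lintegral_increment_le hmeas hconv hg (r := 2 * R * (1 / 2) ^ k)
      (A := ENNReal.ofReal (M * (2 * R * (1 / 2) ^ k) ^ γ) ^ p) ?_ ht0 ht1 hs0 hs1 ?_).trans ?_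
    · intro y hy y' hy' hyy
      refine (h2 y hy y' hy').trans ?_
      gcongr
    · intro x hx z hz z' hz'
      rw [norm_sub_rev, pow_succ, mul_one_div]
      exact norm_contractTo_sub_le hR ht0.le hx hz' hz
    · rw [ENNReal.ofReal_rpow_of_nonneg (by positivity) hp0.le,
        ENNReal.ofReal_rpow_of_nonneg (by positivity) hp0.le,
        ← increment_constant_eq hp0 hR0 hM k, ENNReal.ofReal_mul (by positivity),
        ENNReal.ofReal_mul (by positivity)]
      apply le_of_eq
      ring
  have bound : ∀ n : ℕ, eLpNorm (G n) P ν ≤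
      B * ENNReal.ofReal (M * (1 + c * ∑ k ∈ Finset.range n, θ ^ k)) := by
    intro n
    induction n with
    | zero => simpa using base
    | succ n ih =>
      have hsum : 0 ≤ ∑ k ∈ Finset.range n, θ ^ k := Finset.sum_nonneg fun _ _ => by positivity
      calc eLpNorm (G (n + 1)) P ν = eLpNorm (G n - (G n - H (n + 1))) P ν := by
            rw [hGH, sub_sub_cancel]
        _ ≤ eLpNorm (G n) P ν + eLpNorm (G n - H (n + 1)) P ν :=
            eLpNorm_sub_le (hGm n).aestronglyMeasurable
              ((hGm n).sub (hHm (n + 1))).aestronglyMeasurable hP1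
        _ ≤ B * ENNReal.ofReal (M * (1 + c * ∑ k ∈ Finset.range n, θ ^ k)) +
            B * ENNReal.ofReal (M * (c * θ ^ n)) := add_le_add ih (incr n)
        _ = _ := by
            rw [← mul_add, ← ENNReal.ofReal_add (by positivity) (by positivity),
              Finset.sum_range_succ]
            congr 2
            ring
  set C : ℝ := 1 + c * (1 - θ)⁻¹ with hC
  have bound' : ∀ n : ℕ, eLpNorm (G n) P ν ≤ B * ENNReal.ofReal (M * C) := by
    intro n
    refine (bound n).trans ?_
    gcongr
    rw [hC, ← tsum_geometric_of_lt_one hθ0 hθ1]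
    gcongr
    exact (summable_geometric_of_lt_one hθ0 hθ1).sum_le_tsum _ fun _ _ => by positivity
  have lim : eLpNorm (fun q : EuclideanSpace ℝ (Fin d) × EuclideanSpace ℝ (Fin d) ×
      EuclideanSpace ℝ (Fin d) => g (q.1, q.1)) P ν ≤ B * ENNReal.ofReal (M * C) := by
    refine (Lp.eLpNorm_lim_le_liminf_eLpNorm (fun n => (hGm n).aestronglyMeasurable) _ ?_).trans
      ?_
    · have hD3 : ∀ᵐ q ∂ν, q ∈ D ×ˢ D ×ˢ D := by
        rw [hν, hμ, Measure.prod_restrict, Measure.prod_restrict]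
        exact ae_restrict_mem (hmeas.prod (hmeas.prod hmeas))
      filter_upwards [hD3] with q hq
      simp only [hG]
      exact hlim q.1 hq.1 q.2.1 hq.2.1
    · exact liminf_le_of_le (by isBoundedDefault) fun b hb => by
        obtain ⟨n, hn⟩ := hb.exists
        exact hn.trans (bound' n)
  rw [eLpNorm_ofReal_le_iff hp0, ENNReal.mul_rpow_of_nonneg _ _ hp0.le, hBp,
    lintegral_triple μ (by fun_prop)] at lim
  have hdm : Measurable fun x : EuclideanSpace ℝ (Fin d) => ‖g (x, x)‖ₑ ^ p := by fun_prop
  simp only [lintegral_const, hμV] at lim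
  rw [lintegral_mul_const _ (hdm.mul_const V), lintegral_mul_const _ hdm, mul_assoc,
    mul_comm _ (V * V)] at lim
  exact (ENNReal.mul_le_mul_iff_right (mul_ne_zero hV0 hV0) (ENNReal.mul_ne_top hV hV)).1 lim

/-- Translation between the Bochner form of an `L^p` bound and its `ℝ≥0∞`-valued form; continuity on
a compact set provides the integrability that excludes junk values. -/
lemma integral_rpow_le_iff {E : Type*} [TopologicalSpace E] [MeasurableSpace E] [BorelSpace E]
    [T2Space E] {μ : Measure E} [IsFiniteMeasureOnCompacts μ] {D K : Set E}
    (hK : IsCompact K) (hDK : D ⊆ K) {φ : E → ℝ} (hφ : ContinuousOn φ K) {p m : ℝ} (hp : 0 < p)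
    (hm : 0 ≤ m) :
    (∫ x in D, |φ x| ^ p ∂μ) ^ (1 / p) ≤ m ↔
      ∫⁻ x in D, ‖φ x‖ₑ ^ p ∂μ ≤ ENNReal.ofReal m ^ p := by
  have hint : IntegrableOn (fun x => |φ x| ^ p) D μ :=
    ((hφ.abs.rpow_const fun _ _ => Or.inr hp.le).integrableOn_compact hK).mono_set hDK
  have hnn : 0 ≤ ∫ x in D, |φ x| ^ p ∂μ := integral_nonneg fun x => by positivity
  have heq : ∫⁻ x in D, ‖φ x‖ₑ ^ p ∂μ = ENNReal.ofReal (∫ x in D, |φ x| ^ p ∂μ) := by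
    rw [ofReal_integral_eq_lintegral_ofReal hint (ae_of_all _ fun x => by positivity)]
    refine lintegral_congr fun x => ?_
    rw [Real.enorm_eq_ofReal_abs, ENNReal.ofReal_rpow_of_nonneg (abs_nonneg _) hp.le]
  rw [heq, ENNReal.ofReal_rpow_of_nonneg hm hp.le, ENNReal.ofReal_le_ofReal_iff (by positivity),
    one_div, Real.rpow_inv_le_iff_of_pos hnn hm hp]

/-- diagonal trace bound. For a nonempty bounded convex open `D ⊂ ℝ^d`,
`0 < γ ≤ 1` and `p > 2d/γ`, there is `C > 0` (depending only on `d, p, γ, D`) such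
that every continuous `f : K × K → ℝ` whose `L^p(D)`-valued sup norm in `y` is `≤ M1`
and whose `L^p(D)`-valued `γ`-Hölder seminorm in `y` is `≤ M2` satisfies
`‖f(·,·)|_diag‖_{L^p(D)} ≤ C max{M1, M2}`. -/
theorem stmt_5 {d : ℕ} (D : Set (EuclideanSpace ℝ (Fin d)))
    (hne : D.Nonempty) (hD : Bornology.IsBounded D) (hconv : Convex ℝ D)
    (hopen : IsOpen D)
    (γ p : ℝ) (hγ0 : 0 < γ) (hγ1 : γ ≤ 1) (hp : 2 * d / γ < p) :
    ∃ C > 0, ∀ (f : EuclideanSpace ℝ (Fin d) → EuclideanSpace ℝ (Fin d) → ℝ)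
      (M1 M2 : ℝ),
      ContinuousOn (fun z : EuclideanSpace ℝ (Fin d) × EuclideanSpace ℝ (Fin d) =>
        f z.1 z.2) (closure D ×ˢ closure D) →
      (∀ y ∈ closure D, (∫ x in D, |f x y| ^ p) ^ (1 / p) ≤ M1) →
      (∀ y ∈ closure D, ∀ y' ∈ closure D,
        (∫ x in D, |f x y - f x y'| ^ p) ^ (1 / p) ≤ M2 * ‖y - y'‖ ^ γ) →
      (∫ x in D, |f x x| ^ p) ^ (1 / p) ≤ C * max M1 M2 := by
  have hp0 : 0 < p := lt_of_le_of_lt (by positivity) hp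
  obtain ⟨y₀, hy₀⟩ := hne
  rcases Nat.eq_zero_or_pos d with rfl | hd
  · refine ⟨1, one_pos, fun f M1 M2 _ h1 _ => ?_⟩
    rw [one_mul]
    refine le_trans ?_ ((h1 y₀ (subset_closure hy₀)).trans (le_max_left _ _))
    simp only [Subsingleton.elim _ y₀, le_refl]
  -- For `d ≥ 1`, `p > 2d/γ ≥ 2`.
  have hd1 : (1 : ℝ) ≤ d := by exact_mod_cast hd
  have hpγ : 2 * d < p * γ := (div_lt_iff₀ hγ0).1 hp
  have hp1 : 1 ≤ p := by nlinarith
  have hpd : 2 * d / p < γ := by rw [div_lt_iff₀ hp0]; linarith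
  obtain ⟨R, hR0, hR⟩ := hD.exists_pos_norm_le
  have hdiff : ∀ x ∈ D, ∀ z ∈ D, ‖z - x‖ ≤ 2 * R := fun x hx z hz =>
    (norm_sub_le _ _).trans (by linarith [hR x hx, hR z hz])
  have hθ1 : (2 : ℝ) ^ (2 * d / p - γ) < 1 :=
    Real.rpow_lt_one_of_one_lt_of_neg one_lt_two (by linarith)
  have hinv : 0 < (1 - (2 : ℝ) ^ (2 * d / p - γ))⁻¹ := inv_pos.2 (by linarith)
  have hCpos : 0 < 1 + (2 : ℝ) ^ (d / p : ℝ) * (2 * (2 * R)) ^ γ *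
      (1 - (2 : ℝ) ^ (2 * d / p - γ))⁻¹ := by positivity
  refine ⟨_, hCpos, fun f M1 M2 hf h1 h2 => ?_⟩
  have hK : IsCompact (closure D) := hD.isCompact_closure
  have hM : 0 ≤ max M1 M2 :=
    le_max_of_le_left (le_trans (by positivity) (h1 y₀ (subset_closure hy₀)))
  -- Extending by zero off `K × K` makes the function globally measurable.
  obtain ⟨g, hgdef⟩ : ∃ g, g = (closure D ×ˢ closure D).indicator
    fun z : EuclideanSpace ℝ (Fin d) × EuclideanSpace ℝ (Fin d) => f z.1 z.2 := ⟨_, rfl⟩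
  have hgm : Measurable g := by
    classical
    rw [hgdef, ← Set.piecewise_eq_indicator]
    exact hf.measurable_piecewise continuousOn_const
      (isClosed_closure.prod isClosed_closure).measurableSet
  have hgf : ∀ x ∈ closure D, ∀ y ∈ closure D, g (x, y) = f x y := fun x hx y hy => by
    rw [hgdef, Set.indicator_of_mem (Set.mk_mem_prod hx hy)]
  have hsec : ∀ y ∈ closure D, ContinuousOn (fun x => f x y) (closure D) := fun y hy =>
    hf.comp (f := fun x => (x, y)) (by fun_prop) fun x hx => ⟨hx, hy⟩
  have hdiag : ContinuousOn (fun x => f x x) (closure D) :=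
    hf.comp (f := fun x => (x, x)) (by fun_prop) fun x hx => ⟨hx, hx⟩
  have hmeas := hopen.measurableSet
  have key := lintegral_diagonal_le hmeas hconv (hopen.measure_pos volume ⟨y₀, hy₀⟩).ne'
    hD.measure_lt_top.ne (by positivity) hdiff hγ0 hp1 hpd hgm hM ?_ ?_ ?_
  · rw [mul_comm, integral_rpow_le_iff hK subset_closure hdiag hp0 (by positivity)]
    refine le_trans (le_of_eq ?_) key
    refine setLIntegral_congr_fun hmeas fun x hx => ?_
    simp only [hgf x (subset_closure hx) x (subset_closure hx)]
  · intro x hx z hz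
    have hxK := subset_closure hx
    have hT : ∀ k : ℕ, contractTo ((1 / 2 : ℝ) ^ k) x z ∈ closure D := fun k =>
      subset_closure (contractTo_mem hconv (by positivity)
        (pow_le_one₀ (by norm_num) (by norm_num)) hx hz)
    simp only [hgf x hxK _ (hT _), hgf x hxK x hxK]
    have hTlim : Tendsto (fun k : ℕ => contractTo ((1 / 2 : ℝ) ^ k) x z) atTop (𝓝 x) := by
      have h0 : Tendsto (fun k : ℕ => (1 / 2 : ℝ) ^ k) atTop (𝓝 0) :=
        tendsto_pow_atTop_nhds_zero_of_lt_one (by norm_num) (by norm_num)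
      simpa [contractTo] using (h0.smul_const (z - x)).const_add x
    refine (hf (x, x) ⟨hxK, hxK⟩).tendsto.comp (tendsto_nhdsWithin_iff.2
      ⟨tendsto_const_nhds.prodMk_nhds hTlim, Eventually.of_forall fun k => ⟨hxK, hT k⟩⟩)
  · intro y hy
    have hyK := subset_closure hy
    refine le_trans (le_of_eq ?_) ((integral_rpow_le_iff hK subset_closure (hsec y hyK) hp0 hM).1
      ((h1 y hyK).trans (le_max_left _ _)))
    refine setLIntegral_congr_fun hmeas fun x hx => ?_
    simp only [hgf x (subset_closure hx) y hyK]
  · intro y hy y' hy'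
    have hyK := subset_closure hy
    have hyK' := subset_closure hy'
    refine le_trans (le_of_eq ?_) ((integral_rpow_le_iff hK subset_closure
      ((hsec y hyK).sub (hsec y' hyK')) hp0 (by positivity)).1
      ((h2 y hyK y' hyK').trans (mul_le_mul_of_nonneg_right (le_max_right M1 M2) (by positivity))))
    refine setLIntegral_congr_fun hmeas fun x hx => ?_
    simp only [hgf x (subset_closure hx) y hyK, hgf x (subset_closure hx) y' hyK', Pi.sub_apply]
end

section
/- Let D ⊂ ℝ^d be a nonempty bounded convex open set with closure K, let 0 < γ ≤ 1, let p > 2d/γ be real, and let C be the diagonal trace constant of the base case (depending only on d, p, γ, D). Let k ≥ 1 and let f : K × K^k → ℝ be continuous, written f(x, y_1, …, y_k), with finite mixed norm N := max{ sup_{y ∈ K^k} (∫_D |f(x,y)|^p dx)^{1/p} , sup over nonempty T ⊆ {1,…,k}, y ∈ K^k, and increments h with h_i ≠ 0 for i ∈ T, y + h ∈ K^k, of (∫_D |Δ_T^h f(x, ·)(y)|^p dx)^{1/p} / ∏_{i∈T} ‖h_i‖^γ }. Then the full diagonal trace x ↦ f(x, x, …, x) satisfies (∫_D |f(x,x,…,x)|^p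 dx)^{1/p} ≤ C^k · N. -/
/-!
Induction on the number `k` of parameter variables. Allowing `T = ∅` in the mixed difference (it is
then the value `g y`, with weight `1`) merges the sup bound and the seminorm bounds into a single
hypothesis `‖Δ_T^h f(x, ·)(y)‖_{L^p} ≤ N ∏_{i ∈ T} ‖h_i‖^γ` for all `T`, which makes `k = 0` trivial.

For the step, freeze the first variable at `a`. The function `f(x, a, ·)` has mixed norm at most `N`
(differences over sets `T` avoiding the first variable, `mixedDiff_map_succ`), and
`f(x, a, ·) - f(x, b, ·)` has mixed norm at most `N ‖a - b‖^γ` (differences over sets containing the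
first variable, `mixedDiff_insert_zero`). By the induction hypothesis, `ξ(x, a) = f(x, a, x, …, x)`
has both its sup norm and its Hölder seminorm bounded by `C^k N`, and the base case applied to `ξ`
gives the bound `C^(k+1) N` on its diagonal.
-/

open MeasureTheory Finset

/-- The mixed difference `Δ_T^h g(y) = ∑_{S ⊆ T} (-1)^{|T \ S|} g(y + ∑_{i ∈ S} h_i e_i)`; the set
`T` may be empty, and then the difference is `g y`. -/
def mixedDiff {E : Type*} [AddCommGroup E] {k : ℕ} (T : Finset (Fin k)) (y h : Fin k → E)
    (g : (Fin k → E) → ℝ) : ℝ :=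
  ∑ S ∈ T.powerset, (-1 : ℝ) ^ (T.card - S.card) * g (fun i => y i + if i ∈ S then h i else 0)

lemma sum_powerset_map_succ {k : ℕ} (T : Finset (Fin k)) (F : Finset (Fin (k + 1)) → ℝ) :
    ∑ S ∈ (T.map (Fin.succEmb k)).powerset, F S
      = ∑ S ∈ T.powerset, F (S.map (Fin.succEmb k)) := by
  symm
  refine Finset.sum_bij (fun S _ => S.map (Fin.succEmb k)) ?_ ?_ ?_ ?_
  · intro S hS
    simpa using hS
  · intro S _ S' _ h
    exact Finset.map_injective _ h
  · intro S hS
    obtain ⟨u, hu, rfl⟩ := Finset.subset_map_iff.1 (Finset.mem_powerset.1 hS)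
    exact ⟨u, Finset.mem_powerset.2 hu, rfl⟩
  · intros
    rfl

lemma zero_notMem_map_succ {k : ℕ} (T : Finset (Fin k)) :
    (0 : Fin (k + 1)) ∉ T.map (Fin.succEmb k) := by
  simp [Fin.succ_ne_zero]

lemma cons_add_ite_map {E : Type*} [AddCommGroup E] {k : ℕ} (S : Finset (Fin k)) (b c : E)
    (y h : Fin k → E) :
    (fun i => (Fin.cons b y : Fin (k + 1) → E) i
        + if i ∈ S.map (Fin.succEmb k) then (Fin.cons c h : Fin (k + 1) → E) i else 0)
      = Fin.cons b (fun i => y i + if i ∈ S then h i else 0) := by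
  funext i
  refine Fin.cases ?_ (fun j => ?_) i
  · simp [Fin.succ_ne_zero]
  · simp

lemma cons_add_ite_insert {E : Type*} [AddCommGroup E] {k : ℕ} (S : Finset (Fin k)) (b c : E)
    (y h : Fin k → E) :
    (fun i => (Fin.cons b y : Fin (k + 1) → E) i
        + if i ∈ insert 0 (S.map (Fin.succEmb k)) then (Fin.cons c h : Fin (k + 1) → E) i else 0)
      = Fin.cons (b + c) (fun i => y i + if i ∈ S then h i else 0) := by
  funext i
  refine Fin.cases ?_ (fun j => ?_) i
  · simp
  · simp [Fin.succ_ne_zero]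

lemma mixedDiff_map_succ {E : Type*} [AddCommGroup E] {k : ℕ} (T : Finset (Fin k)) (a c : E)
    (y h : Fin k → E) (g : (Fin (k + 1) → E) → ℝ) :
    mixedDiff (T.map (Fin.succEmb k)) (Fin.cons a y) (Fin.cons c h) g
      = mixedDiff T y h (fun z => g (Fin.cons a z)) := by
  unfold mixedDiff
  rw [sum_powerset_map_succ]
  simp only [cons_add_ite_map, Finset.card_map]

lemma mixedDiff_insert_zero {E : Type*} [AddCommGroup E] {k : ℕ} (T : Finset (Fin k)) (a b : E)
    (y h : Fin k → E) (g : (Fin (k + 1) → E) → ℝ) :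
    mixedDiff (insert 0 (T.map (Fin.succEmb k))) (Fin.cons b y) (Fin.cons (a - b) h) g
      = mixedDiff T y h (fun z => g (Fin.cons a z) - g (Fin.cons b z)) := by
  unfold mixedDiff
  rw [Finset.sum_powerset_insert (zero_notMem_map_succ T), sum_powerset_map_succ,
    sum_powerset_map_succ, ← Finset.sum_add_distrib]
  refine Finset.sum_congr rfl fun S hS => ?_
  have hc : S.card ≤ T.card := Finset.card_le_card (Finset.mem_powerset.1 hS)
  rw [cons_add_ite_map, cons_add_ite_insert, Finset.card_insert_of_notMem (zero_notMem_map_succ T),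
    Finset.card_insert_of_notMem (zero_notMem_map_succ S), Finset.card_map, Finset.card_map,
    Nat.add_sub_add_right, Nat.sub_add_comm hc, pow_succ, add_sub_cancel]
  ring

/-- The iterated trace bound with the mixed norm hypothesis stated for all `T`, including `∅`. -/
lemma diagonal_trace_bound {d : ℕ} (D : Set (EuclideanSpace ℝ (Fin d)))
    (γ p C : ℝ) (hγ0 : 0 < γ) (hp : 0 < p)
    (hbase : ∀ (ξ : EuclideanSpace ℝ (Fin d) → EuclideanSpace ℝ (Fin d) → ℝ)
      (M1 M2 : ℝ),
      ContinuousOn (fun z : EuclideanSpace ℝ (Fin d) × EuclideanSpace ℝ (Fin d) =>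
        ξ z.1 z.2) (closure D ×ˢ closure D) →
      (∀ y ∈ closure D, (∫ x in D, |ξ x y| ^ p) ^ (1 / p) ≤ M1) →
      (∀ y ∈ closure D, ∀ y' ∈ closure D,
        (∫ x in D, |ξ x y - ξ x y'| ^ p) ^ (1 / p) ≤ M2 * ‖y - y'‖ ^ γ) →
      (∫ x in D, |ξ x x| ^ p) ^ (1 / p) ≤ C * max M1 M2) (k : ℕ) :
    ∀ (f : EuclideanSpace ℝ (Fin d) → (Fin k → EuclideanSpace ℝ (Fin d)) → ℝ)
      (N : ℝ),
      ContinuousOn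
        (fun z : EuclideanSpace ℝ (Fin d) × (Fin k → EuclideanSpace ℝ (Fin d)) =>
          f z.1 z.2)
        (closure D ×ˢ {y | ∀ i, y i ∈ closure D}) →
      (∀ T : Finset (Fin k), ∀ y h : Fin k → EuclideanSpace ℝ (Fin d),
        (∀ i, y i ∈ closure D) → (∀ i ∈ T, h i ≠ 0) → (∀ i ∉ T, h i = 0) →
        (∀ i, y i + h i ∈ closure D) →
        (∫ x in D, |mixedDiff T y h (f x)| ^ p) ^ (1 / p) ≤ N * ∏ i ∈ T, ‖h i‖ ^ γ) →
      (∫ x in D, |f x (fun _ => x)| ^ p) ^ (1 / p) ≤ C ^ k * N := by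
  induction k with
  | zero =>
    intro f N _ hN
    have h := hN ∅ 0 0 (fun i => i.elim0) (fun i => i.elim0) (fun i => i.elim0) (fun i => i.elim0)
    simp only [mixedDiff, Finset.powerset_empty, Finset.sum_singleton, Finset.prod_empty,
      Finset.card_empty, Nat.sub_zero, pow_zero, one_mul, mul_one] at h ⊢
    convert h using 6 with x
    exact congrArg (f x) (Subsingleton.elim _ _)
  | succ k ih =>
    intro f N hf hN
    have hslice : ∀ a ∈ closure D, ContinuousOn
        (fun z : EuclideanSpace ℝ (Fin d) × (Fin k → EuclideanSpace ℝ (Fin d)) =>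
          f z.1 (Fin.cons a z.2)) (closure D ×ˢ {y | ∀ i, y i ∈ closure D}) := by
      intro a ha
      refine hf.comp (f := fun z : EuclideanSpace ℝ (Fin d) × (Fin k → EuclideanSpace ℝ (Fin d)) =>
        (z.1, (Fin.cons a z.2 : Fin (k + 1) → EuclideanSpace ℝ (Fin d))))
        (Continuous.continuousOn ?_) ?_
      · exact continuous_fst.prodMk (continuous_const.finCons continuous_snd)
      · rintro ⟨x, y⟩ ⟨hx, hy⟩
        refine ⟨hx, fun i => ?_⟩
        refine Fin.cases ?_ (fun j => ?_) i
        · simpa using ha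
        · simpa using hy j
    have key := hbase (fun x a => f x (Fin.cons a (fun _ => x))) (C ^ k * N) (C ^ k * N) ?_ ?_ ?_
    · rw [max_self, ← mul_assoc, ← pow_succ'] at key
      convert key using 6 with x
      congr 1
      funext i
      refine Fin.cases ?_ (fun j => ?_) i <;> simp
    · refine hf.comp (f := fun z : EuclideanSpace ℝ (Fin d) × EuclideanSpace ℝ (Fin d) =>
        (z.1, (Fin.cons z.2 (fun _ => z.1) : Fin (k + 1) → EuclideanSpace ℝ (Fin d))))
        (Continuous.continuousOn ?_) ?_
      · refine continuous_fst.prodMk (continuous_pi fun i => ?_)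
        refine Fin.cases ?_ (fun j => ?_) i
        · exact continuous_snd
        · exact continuous_fst
      · rintro ⟨x, a⟩ ⟨hx, ha⟩
        refine ⟨hx, fun i => ?_⟩
        refine Fin.cases ?_ (fun j => ?_) i
        · simpa using ha
        · simpa using hx
    · intro a ha
      refine ih (fun x y => f x (Fin.cons a y)) N (hslice a ha) ?_
      intro T y h hy hT hT' hyh
      have := hN (T.map (Fin.succEmb k)) (Fin.cons a y) (Fin.cons 0 h) ?_ ?_ ?_ ?_
      · simpa only [mixedDiff_map_succ, Finset.prod_map, Fin.coe_succEmb, Fin.cons_succ] using this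
      · exact Fin.cases (by simpa using ha) (fun j => by simpa using hy j)
      · refine Fin.cases (fun h0 => absurd h0 (zero_notMem_map_succ T)) (fun j hj => ?_)
        simpa using hT j (by simpa using hj)
      · refine Fin.cases (fun _ => by simp) (fun j hj => ?_)
        simpa using hT' j (by simpa using hj)
      · exact Fin.cases (by simpa using ha) (fun j => by simpa using hyh j)
    · intro a ha b hb
      by_cases hab : a = b
      · subst hab
        simp [Real.zero_rpow hp.ne', Real.zero_rpow hγ0.ne', Real.zero_rpow (inv_ne_zero hp.ne')]
      rw [mul_assoc]
      refine ih (fun x y => f x (Fin.cons a y) - f x (Fin.cons b y)) (N * ‖a - b‖ ^ γ)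
        ((hslice a ha).sub (hslice b hb)) ?_
      intro T y h hy hT hT' hyh
      have := hN (insert 0 (T.map (Fin.succEmb k))) (Fin.cons b y) (Fin.cons (a - b) h) ?_ ?_ ?_ ?_
      · simpa only [mixedDiff_insert_zero, Finset.prod_insert (zero_notMem_map_succ T),
          Finset.prod_map, Fin.coe_succEmb, Fin.cons_succ, Fin.cons_zero, ← mul_assoc] using this
      · exact Fin.cases (by simpa using hb) (fun j => by simpa using hy j)
      · refine Fin.cases (fun _ => by simpa [sub_eq_zero] using hab) (fun j hj => ?_)
        simpa using hT j (by simpa [Fin.succ_ne_zero] using hj)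
      · refine Fin.cases (fun h0 => absurd (Finset.mem_insert_self _ _) h0) (fun j hj => ?_)
        simpa using hT' j (by simpa [Fin.succ_ne_zero] using hj)
      · exact Fin.cases (by simpa using ha) (fun j => by simpa using hyh j)

/-- iterated diagonal trace bound. Let `D ⊂ ℝ^d` be nonempty bounded
convex open with closure `K`, `0 < γ ≤ 1`, `p > 2d/γ`, and let `C > 0` be a base-case
diagonal trace constant, i.e. every continuous `ξ : K × K → ℝ` satisfies
`‖ξ(x,x)‖_{L^p(D)} ≤ C max{sup_y ‖ξ(·,y)‖_{L^p}, [ξ]}`. Then for `k ≥ 1` and every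
continuous `f : K × K^k → ℝ` whose mixed norm is bounded by `N`, the full diagonal
trace satisfies `‖f(x,x,…,x)‖_{L^p(D)} ≤ C^k · N`. -/
theorem stmt_6 {d k : ℕ} (hk : 1 ≤ k) (D : Set (EuclideanSpace ℝ (Fin d)))
    (hne : D.Nonempty) (hD : Bornology.IsBounded D) (hconv : Convex ℝ D)
    (hopen : IsOpen D)
    (γ p C : ℝ) (hγ0 : 0 < γ) (hγ1 : γ ≤ 1) (hp : 2 * d / γ < p) (hC : 0 < C)
    (hbase : ∀ (ξ : EuclideanSpace ℝ (Fin d) → EuclideanSpace ℝ (Fin d) → ℝ)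
      (M1 M2 : ℝ),
      ContinuousOn (fun z : EuclideanSpace ℝ (Fin d) × EuclideanSpace ℝ (Fin d) =>
        ξ z.1 z.2) (closure D ×ˢ closure D) →
      (∀ y ∈ closure D, (∫ x in D, |ξ x y| ^ p) ^ (1 / p) ≤ M1) →
      (∀ y ∈ closure D, ∀ y' ∈ closure D,
        (∫ x in D, |ξ x y - ξ x y'| ^ p) ^ (1 / p) ≤ M2 * ‖y - y'‖ ^ γ) →
      (∫ x in D, |ξ x x| ^ p) ^ (1 / p) ≤ C * max M1 M2) :
    ∀ (f : EuclideanSpace ℝ (Fin d) → (Fin k → EuclideanSpace ℝ (Fin d)) → ℝ)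
      (N : ℝ),
      ContinuousOn
        (fun z : EuclideanSpace ℝ (Fin d) × (Fin k → EuclideanSpace ℝ (Fin d)) =>
          f z.1 z.2)
        (closure D ×ˢ {y | ∀ i, y i ∈ closure D}) →
      (∀ y : Fin k → EuclideanSpace ℝ (Fin d), (∀ i, y i ∈ closure D) →
        (∫ x in D, |f x y| ^ p) ^ (1 / p) ≤ N) →
      (∀ T : Finset (Fin k), T.Nonempty →
        ∀ y h : Fin k → EuclideanSpace ℝ (Fin d),
        (∀ i, y i ∈ closure D) → (∀ i ∈ T, h i ≠ 0) → (∀ i ∉ T, h i = 0) →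
        (∀ i, y i + h i ∈ closure D) →
        (∫ x in D, |∑ S ∈ T.powerset, (-1 : ℝ) ^ (T.card - S.card) *
            f x (fun i => y i + if i ∈ S then h i else 0)| ^ p) ^ (1 / p)
          ≤ N * ∏ i ∈ T, ‖h i‖ ^ γ) →
      (∫ x in D, |f x (fun _ => x)| ^ p) ^ (1 / p) ≤ C ^ k * N := by
  intro f N hf hsup hmix
  have hp0 : 0 < p := lt_of_le_of_lt (by positivity) hp
  refine diagonal_trace_bound D γ p C hγ0 hp0 hbase k f N hf ?_
  intro T y h hy hT hT' hyh
  rcases T.eq_empty_or_nonempty with rfl | hTne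
  · have hh : h = 0 := funext fun i => hT' i (Finset.notMem_empty i)
    simpa [mixedDiff, hh] using hsup y hy
  · exact hmix T hTne y h hy hT hT' hyh
end

section
/- Let D ⊂ ℝ^d be a nonempty bounded convex open set with closure K, let 0 < γ ≤ 1 and let p > 2d/γ be real. There exists a constant C > 0, depending only on d, p, γ and D, with the following property: for every continuous f : K × K × K → ℝ, written f(x, y_1, y_2), with finite mixed norm N := max{ sup_{y1,y2} ‖f(·,y1,y2)‖_{L^p(D)} , sup_{y1,y2,h1≠0} ‖f(·,y1+h1,y2)−f(·,y1,y2)‖_{L^p(D)}/‖h1‖^γ , sup_{y1,y2,h2≠0} ‖f(·,y1,y2+h2)−f(·,y1,y2)‖_{L^p(D)}/‖h2‖^γ , sup_{y1,y2,h1≠0,h2≠0} ‖f(·,y1+h1,y2+h2)−f(·,y1+h1,y2)−f(·,y1,y2+h2)+f(·,y1,y2)‖_{L^p(D)}/(‖h1‖^γ‖h2‖^γ) }, the partial diagonal trace g(x, y_2) := f(x, x, y_2) satisfies both sup_{y2 ∈ K} ‖g(·,y2)‖_{L^p(D)} ≤ C N and sup_{y2, h ≠ 0, y2+h ∈ K}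 ‖g(·,y2+h) − g(·,y2)‖_{L^p(D)} / ‖h‖^γ ≤ C N; i.e., the diagonal trace in the first two variables is a γ-Hölder L^p(D)-valued function of the remaining variable, with norm controlled by the mixed norm of f. -/
open MeasureTheory

/-!
Write `F(x, y)` for a function of two variables with `‖F(·, y)‖_p ≤ M` and
`‖F(·, y) - F(·, y')‖_p ≤ M |y - y'|^γ`. It suffices to bound the `Lᵖ(D)` norm of `x ↦ F(x, x)`
by `C M`: the theorem follows with `F = f(·, ·, y₂)`, `M = N`, and with
`F = f(·, ·, y₂ + h) - f(·, ·, y₂)`, `M = N |h|^γ`.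

For fixed `x`, the function `ψ = F(x, ·)` satisfies the Sobolev-type bound
`|ψ(x)|^p ≤ C (⨍ |ψ|^p + ⨍⨍ |ψ(u) - ψ(v)|^p / |u - v|^(γp))` with averages over `D`
(`enorm_rpow_le_of_continuous`). It is proved by chaining: by convexity the sets
`x + 2⁻ⁿ (D - x)` lie in `D`, the averages of `ψ` over them tend to `ψ(x)`, and by Jensen's
inequality and a change of variables consecutive averages differ by at most a multiple of
`2^(-n (γp - 2d) / p)` times the `p`-th root of the double integral; this is summable because
`γp > 2d`. Integrating over `x` and exchanging integrals (`diagonal_lintegral_le`) leaves, for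
each `u` and `v`, exactly the quantities controlled by the hypotheses on `F`.
-/

open scoped ENNReal Topology

/-- Jensen's inequality on a probability space, in the form `‖·‖_{L¹} ≤ ‖·‖_{Lᵖ}`. -/
theorem enorm_integral_le_lintegral_rpow {Ω : Type*} [MeasurableSpace Ω] (μ : Measure Ω)
    [IsProbabilityMeasure μ] {p : ℝ} (hp : 1 ≤ p) {φ : Ω → ℝ} (hφ : AEStronglyMeasurable φ μ) :
    ‖∫ u, φ u ∂μ‖ₑ ≤ (∫⁻ u, ‖φ u‖ₑ ^ p ∂μ) ^ (1 / p) := by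
  have h := eLpNorm'_le_eLpNorm'_of_exponent_le one_pos hp μ hφ
  simp only [eLpNorm'_eq_lintegral_enorm, ENNReal.rpow_one, div_one] at h
  exact (enorm_integral_le_lintegral_enorm φ).trans h

/-- Contracting `D` towards `x ∈ D` by `2⁻ⁿ` maps the convex set `D` into itself, and changing
variables costs at most the Jacobian `2ⁿᵈ`. -/
theorem lintegral_cond_contract_le {d : ℕ} {D : Set (EuclideanSpace ℝ (Fin d))}
    (hconv : Convex ℝ D) (hopen : IsOpen D) {x : EuclideanSpace ℝ (Fin d)} (hx : x ∈ D) (n : ℕ)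
    (H : EuclideanSpace ℝ (Fin d) → ℝ≥0∞) :
    ∫⁻ u, H (x + (2⁻¹ : ℝ) ^ n • (u - x)) ∂(ProbabilityTheory.cond volume D) ≤
      2 ^ (n * d) * ∫⁻ u, H u ∂(ProbabilityTheory.cond volume D) := by
  have hD := hopen.measurableSet
  have ht : ((2⁻¹ : ℝ) ^ n) ≠ 0 := by positivity
  have ht1 : ((2⁻¹ : ℝ) ^ n) ≤ 1 := pow_le_one₀ (by norm_num) (by norm_num)
  have key : ∫⁻ u in D, H (x + (2⁻¹ : ℝ) ^ n • (u - x)) ≤ 2 ^ (n * d) * ∫⁻ u in D, H u := by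
    calc ∫⁻ u in D, H (x + (2⁻¹ : ℝ) ^ n • (u - x))
        ≤ ∫⁻ u, D.indicator H ((2⁻¹ : ℝ) ^ n • u + (x - (2⁻¹ : ℝ) ^ n • x)) := by
          rw [← lintegral_indicator hD]
          refine lintegral_mono fun u => ?_
          by_cases hu : u ∈ D
          · have e : (2⁻¹ : ℝ) ^ n • u + (x - (2⁻¹ : ℝ) ^ n • x)
                = x + (2⁻¹ : ℝ) ^ n • (u - x) := by rw [smul_sub]; abel
            have hm : x + (2⁻¹ : ℝ) ^ n • (u - x) ∈ D :=
              hconv.add_smul_sub_mem hx hu ⟨by positivity, ht1⟩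
            rw [e, Set.indicator_of_mem hu, Set.indicator_of_mem hm]
          · simp [Set.indicator_of_notMem hu]
      _ = ∫⁻ v, D.indicator H (v + (x - (2⁻¹ : ℝ) ^ n • x))
            ∂(Measure.map (fun u : EuclideanSpace ℝ (Fin d) => (2⁻¹ : ℝ) ^ n • u) volume) :=
          (lintegral_map_equiv (fun v => D.indicator H (v + (x - (2⁻¹ : ℝ) ^ n • x)))
            (Homeomorph.smulOfNeZero _ ht).toMeasurableEquiv).symm
      _ = 2 ^ (n * d) * ∫⁻ u in D, H u := by
          rw [Measure.map_addHaar_smul _ ht, lintegral_smul_measure,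
            lintegral_add_right_eq_self, lintegral_indicator hD, smul_eq_mul]
          congr 1
          rw [finrank_euclideanSpace_fin, abs_of_pos (by positivity), ← pow_mul, inv_pow, inv_inv,
            ENNReal.ofReal_pow (by norm_num), ENNReal.ofReal_ofNat]
  rw [ProbabilityTheory.cond, lintegral_smul_measure, lintegral_smul_measure, smul_eq_mul,
    smul_eq_mul, mul_left_comm]
  gcongr

/-- The averages of a continuous `ψ` over the copies of `D` shrunk towards `x` by `2⁻ⁿ`
are well defined and converge to `ψ x`. -/
theorem tendsto_integral_contract {d : ℕ} {D : Set (EuclideanSpace ℝ (Fin d))}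
    (hD : Bornology.IsBounded D) (hconv : Convex ℝ D) (hopen : IsOpen D)
    [IsProbabilityMeasure (ProbabilityTheory.cond volume D)]
    {x : EuclideanSpace ℝ (Fin d)} (hx : x ∈ D)
    {ψ : EuclideanSpace ℝ (Fin d) → ℝ} (hψ : Continuous ψ) :
    (∀ n : ℕ, Integrable (fun u => ψ (x + (2⁻¹ : ℝ) ^ n • (u - x)))
      (ProbabilityTheory.cond volume D)) ∧
    Filter.Tendsto (fun n : ℕ => ∫ u, ψ (x + (2⁻¹ : ℝ) ^ n • (u - x))
      ∂(ProbabilityTheory.cond volume D)) Filter.atTop (𝓝 (ψ x)) := by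
  obtain ⟨B, hB⟩ := hD.isCompact_closure.exists_bound_of_continuousOn hψ.continuousOn
  have hmem : ∀ᵐ u ∂(ProbabilityTheory.cond volume D), u ∈ D :=
    ProbabilityTheory.ae_cond_mem hopen.measurableSet
  have hbd : ∀ n : ℕ, ∀ᵐ u ∂(ProbabilityTheory.cond volume D),
      ‖ψ (x + (2⁻¹ : ℝ) ^ n • (u - x))‖ ≤ B := fun n => by
    filter_upwards [hmem] with u hu
    exact hB _ (subset_closure (hconv.add_smul_sub_mem hx hu
      ⟨by positivity, pow_le_one₀ (by norm_num) (by norm_num)⟩))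
  have hmeas : ∀ n : ℕ, AEStronglyMeasurable (fun u => ψ (x + (2⁻¹ : ℝ) ^ n • (u - x)))
      (ProbabilityTheory.cond volume D) := fun n =>
    Continuous.aestronglyMeasurable (by fun_prop)
  refine ⟨fun n => Integrable.of_bound (hmeas n) B (hbd n), ?_⟩
  have hlim := tendsto_integral_of_dominated_convergence (f := fun _ => ψ x) (fun _ => B) hmeas
    (integrable_const B) hbd (Filter.Eventually.of_forall fun u => by
      have h0 : Filter.Tendsto (fun n : ℕ => (2⁻¹ : ℝ) ^ n) Filter.atTop (𝓝 0) :=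
        tendsto_pow_atTop_nhds_zero_of_lt_one (by norm_num) (by norm_num)
      have h1 : Continuous fun t : ℝ => ψ (x + t • (u - x)) := by fun_prop
      simpa [Function.comp_def] using (h1.tendsto 0).comp h0)
  simpa using hlim

/-- The fractional Sobolev bound: a point value of `ψ` is controlled by the `Lᵖ` norm and the
Gagliardo seminorm with kernel exponent `q > 2d`. On the diagonal `u = v` the integrand is
`0 / 0 = 0`. -/
theorem enorm_rpow_le_of_continuous {d : ℕ} {D : Set (EuclideanSpace ℝ (Fin d))}
    (hne : D.Nonempty) (hD : Bornology.IsBounded D) (hconv : Convex ℝ D) (hopen : IsOpen D)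
    {p q : ℝ} (hp : 1 ≤ p) (hq : 2 * d < q) :
    ∃ C : ℝ≥0∞, C ≠ ∞ ∧ ∀ ψ : EuclideanSpace ℝ (Fin d) → ℝ, Continuous ψ → ∀ x ∈ D,
      ‖ψ x‖ₑ ^ p ≤ C * (∫⁻ u, ‖ψ u‖ₑ ^ p ∂(ProbabilityTheory.cond volume D) +
        ∫⁻ u, ∫⁻ v, ‖ψ u - ψ v‖ₑ ^ p / edist u v ^ q
          ∂(ProbabilityTheory.cond volume D) ∂(ProbabilityTheory.cond volume D)) := by
  have hp0 : 0 < p := by linarith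
  have hq0 : 0 < q := lt_of_le_of_lt (by positivity) hq
  have : IsProbabilityMeasure (ProbabilityTheory.cond volume D) :=
    ProbabilityTheory.cond_isProbabilityMeasure_of_finite (hopen.measure_pos _ hne).ne'
      hD.measure_lt_top.ne
  have hmem : ∀ᵐ u ∂(ProbabilityTheory.cond volume D), u ∈ D :=
    ProbabilityTheory.ae_cond_mem hopen.measurableSet
  set ν := ProbabilityTheory.cond (volume : Measure (EuclideanSpace ℝ (Fin d))) D with hν
  set R := Metric.ediam D with hR
  have hRtop : R ≠ ∞ := hD.ediam_ne_top
  -- `K * J * ρ ^ n` bounds the `p`-th power of the difference of the averages at scales `n`, `n + 1`;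
  -- the two Jacobians contribute `2 ^ (2 * d)` per step, which `q > 2 * d` compensates.
  set K : ℝ≥0∞ := (2 * R) ^ q * 2 ^ d with hK
  set ρ : ℝ≥0∞ := (2⁻¹) ^ q * 2 ^ (2 * d) with hρ
  have hρ1 : ρ < 1 := by
    rw [hρ, ENNReal.inv_rpow, mul_comm, ← div_eq_mul_inv]
    refine ENNReal.div_lt_of_lt_mul' ?_
    rw [mul_one, ← ENNReal.rpow_natCast]
    refine ENNReal.rpow_lt_rpow_of_exponent_lt (by norm_num) (by norm_num) ?_
    push_cast; exact hq
  have hr1 : ρ ^ (1 / p) < 1 := ENNReal.rpow_lt_one hρ1 (by positivity)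
  have hKtop : K ≠ ∞ := ENNReal.mul_ne_top
    (ENNReal.rpow_ne_top_of_nonneg hq0.le (ENNReal.mul_ne_top (by norm_num) hRtop)) (by simp)
  set L : ℝ≥0∞ := K * ((1 - ρ ^ (1 / p))⁻¹) ^ p with hL
  have hLtop : L ≠ ∞ := ENNReal.mul_ne_top hKtop (ENNReal.rpow_ne_top_of_nonneg hp0.le
    (ENNReal.inv_ne_top.2 (tsub_pos_of_lt hr1).ne'))
  refine ⟨2 ^ (p - 1) * (1 + L), ENNReal.mul_ne_top
    (ENNReal.rpow_ne_top_of_nonneg (by linarith) (by norm_num)) (by simp [hLtop]), ?_⟩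
  intro ψ hψ x hx
  set J := ∫⁻ u, ∫⁻ v, ‖ψ u - ψ v‖ₑ ^ p / edist u v ^ q ∂ν ∂ν with hJ
  obtain ⟨hint, hlim⟩ := tendsto_integral_contract hD hconv hopen hx hψ
  rw [← hν] at hint hlim
  set A : ℕ → ℝ := fun n => ∫ u, ψ (x + (2⁻¹ : ℝ) ^ n • (u - x)) ∂ν with hA
  have hdist : ∀ (n : ℕ) (u : EuclideanSpace ℝ (Fin d)), u ∈ D →
      edist (x + (2⁻¹ : ℝ) ^ n • (u - x)) x ≤ (2⁻¹ : ℝ≥0∞) ^ n * R := fun n u hu => by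
    have h2 : ‖(2⁻¹ : ℝ)‖ₑ = 2⁻¹ := by
      rw [enorm_inv (by norm_num)]
      congr 1
      rw [Real.enorm_eq_ofReal (by norm_num), ENNReal.ofReal_ofNat]
    rw [edist_eq_enorm_sub, add_sub_cancel_left, enorm_smul, enorm_pow, h2, ← edist_eq_enorm_sub]
    gcongr
    exact Metric.edist_le_ediam_of_mem hu hx
  have hstep : ∀ n : ℕ, edist (A n) (A n.succ) ≤ (K * J) ^ (1 / p) * (ρ ^ (1 / p)) ^ n := by
    intro n
    set a : EuclideanSpace ℝ (Fin d) → EuclideanSpace ℝ (Fin d) :=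
      fun u => x + (2⁻¹ : ℝ) ^ n • (u - x) with ha
    set b : EuclideanSpace ℝ (Fin d) → EuclideanSpace ℝ (Fin d) :=
      fun u => x + (2⁻¹ : ℝ) ^ (n + 1) • (u - x) with hb
    have hac : Continuous a := by fun_prop
    have hbc : Continuous b := by fun_prop
    have hcont : Continuous fun z : EuclideanSpace ℝ (Fin d) × EuclideanSpace ℝ (Fin d) =>
      ψ (a z.1) - ψ (b z.2) := by fun_prop
    -- Independent integration variables `z.1`, `z.2`, so that each can be changed separately.
    have hdiff : A n - A (n + 1) = ∫ z, (ψ (a z.1) - ψ (b z.2)) ∂(ν.prod ν) := by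
      rw [integral_sub ((hint n).comp_fst ν) ((hint (n + 1)).comp_snd ν)]
      rw [integral_fun_fst (fun u => ψ (a u)), integral_fun_snd (fun u => ψ (b u))]
      simp [hA, ha, hb]
    have hmain : ∫⁻ z, ‖ψ (a z.1) - ψ (b z.2)‖ₑ ^ p ∂(ν.prod ν) ≤ K * J * ρ ^ n := by
      rw [lintegral_prod _ (by
        exact (hcont.enorm.measurable.pow_const p).aemeasurable)]
      calc ∫⁻ u, ∫⁻ v, ‖ψ (a u) - ψ (b v)‖ₑ ^ p ∂ν ∂ν
          ≤ ∫⁻ u, ∫⁻ v, ((2⁻¹) ^ n * (2 * R)) ^ q *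
              (‖ψ (a u) - ψ (b v)‖ₑ ^ p / edist (a u) (b v) ^ q) ∂ν ∂ν := by
            refine lintegral_mono_ae ?_
            filter_upwards [hmem] with u hu
            refine lintegral_mono_ae ?_
            filter_upwards [hmem] with v hv
            have hab : edist (a u) (b v) ≤ (2⁻¹) ^ n * (2 * R) := by
              calc edist (a u) (b v) ≤ edist (a u) x + edist (b v) x :=
                    edist_triangle_right _ _ _
                _ ≤ (2⁻¹) ^ n * R + (2⁻¹) ^ n * R := by
                    refine add_le_add (hdist n u hu) ((hdist (n + 1) v hv).trans ?_)
                    gcongr ?_ * R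
                    exact pow_le_pow_right_of_le_one' (by simp) (Nat.le_succ n)
                _ = _ := by ring
            rcases eq_or_ne (a u) (b v) with h | h
            · simp [h, hp0]
            · have h0 : edist (a u) (b v) ^ q ≠ 0 := by
                simp [ENNReal.rpow_eq_zero_iff, h, hq0]
              have h1 : edist (a u) (b v) ^ q ≠ ∞ :=
                ENNReal.rpow_ne_top_of_nonneg hq0.le (edist_ne_top _ _)
              calc ‖ψ (a u) - ψ (b v)‖ₑ ^ p
                  = edist (a u) (b v) ^ q *
                    (‖ψ (a u) - ψ (b v)‖ₑ ^ p / edist (a u) (b v) ^ q) :=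
                    (ENNReal.mul_div_cancel h0 h1).symm
                _ ≤ _ := by gcongr
        _ = ((2⁻¹) ^ n * (2 * R)) ^ q *
              ∫⁻ u, ∫⁻ v, ‖ψ (a u) - ψ (b v)‖ₑ ^ p / edist (a u) (b v) ^ q ∂ν ∂ν := by
            have hc : ((2⁻¹) ^ n * (2 * R)) ^ q ≠ ∞ := ENNReal.rpow_ne_top_of_nonneg hq0.le
              (ENNReal.mul_ne_top (by simp) (ENNReal.mul_ne_top (by norm_num) hRtop))
            simp_rw [lintegral_const_mul' _ _ hc]
        _ ≤ ((2⁻¹) ^ n * (2 * R)) ^ q * ∫⁻ u, 2 ^ ((n + 1) * d) *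
              ∫⁻ v, ‖ψ (a u) - ψ v‖ₑ ^ p / edist (a u) v ^ q ∂ν ∂ν := by
            gcongr with u
            exact lintegral_cond_contract_le hconv hopen hx (n + 1)
              (fun v => ‖ψ (a u) - ψ v‖ₑ ^ p / edist (a u) v ^ q)
        _ ≤ ((2⁻¹) ^ n * (2 * R)) ^ q * (2 ^ ((n + 1) * d) * (2 ^ (n * d) * J)) := by
            rw [lintegral_const_mul' _ _ (by simp)]
            gcongr
            exact lintegral_cond_contract_le hconv hopen hx n
              (fun u => ∫⁻ v, ‖ψ u - ψ v‖ₑ ^ p / edist u v ^ q ∂ν)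
        _ = K * J * ρ ^ n := by
            have e : (((2⁻¹ : ℝ≥0∞)) ^ n) ^ q = ((2⁻¹) ^ q) ^ n := by
              rw [← ENNReal.rpow_natCast, ← ENNReal.rpow_natCast, ← ENNReal.rpow_mul,
                ← ENNReal.rpow_mul, mul_comm]
            rw [ENNReal.mul_rpow_of_nonneg _ _ hq0.le, e, hK, hρ]
            ring
    calc edist (A n) (A n.succ) = ‖A n - A (n + 1)‖ₑ := edist_eq_enorm_sub _ _
      _ ≤ (∫⁻ z, ‖ψ (a z.1) - ψ (b z.2)‖ₑ ^ p ∂(ν.prod ν)) ^ (1 / p) := by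
          rw [hdiff]
          exact enorm_integral_le_lintegral_rpow _ hp hcont.aestronglyMeasurable
      _ ≤ (K * J * ρ ^ n) ^ (1 / p) := by gcongr
      _ = _ := by
          rw [ENNReal.mul_rpow_of_nonneg _ _ (by positivity), ← ENNReal.rpow_natCast,
            ← ENNReal.rpow_natCast, ← ENNReal.rpow_mul, ← ENNReal.rpow_mul, mul_comm (n : ℝ)]
  have hsum := edist_le_tsum_of_edist_le_of_tendsto₀ _ hstep hlim
  rw [ENNReal.tsum_mul_left, ENNReal.tsum_geometric] at hsum
  have hA0 : ‖A 0‖ₑ ^ p ≤ ∫⁻ u, ‖ψ u‖ₑ ^ p ∂ν := by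
    have := enorm_integral_le_lintegral_rpow ν hp (hψ.aestronglyMeasurable)
    have e : A 0 = ∫ u, ψ u ∂ν := by simp [hA]
    rw [e]
    calc _ ≤ ((∫⁻ u, ‖ψ u‖ₑ ^ p ∂ν) ^ (1 / p)) ^ p := by gcongr
      _ = _ := by rw [← ENNReal.rpow_mul, one_div_mul_cancel hp0.ne', ENNReal.rpow_one]
  have htri : ‖ψ x‖ₑ ≤ ‖A 0‖ₑ + (K * J) ^ (1 / p) * (1 - ρ ^ (1 / p))⁻¹ := by
    refine le_trans ?_ (add_le_add_right hsum _)
    have := edist_triangle_left (ψ x) 0 (A 0)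
    rw [edist_zero_right, edist_zero_right] at this
    rwa [add_comm]
  calc ‖ψ x‖ₑ ^ p ≤ (‖A 0‖ₑ + (K * J) ^ (1 / p) * (1 - ρ ^ (1 / p))⁻¹) ^ p := by gcongr
    _ ≤ 2 ^ (p - 1) * (‖A 0‖ₑ ^ p + ((K * J) ^ (1 / p) * (1 - ρ ^ (1 / p))⁻¹) ^ p) :=
        ENNReal.rpow_add_le_mul_rpow_add_rpow _ _ hp
    _ = 2 ^ (p - 1) * (‖A 0‖ₑ ^ p + L * J) := by
        rw [ENNReal.mul_rpow_of_nonneg _ _ hp0.le, ← ENNReal.rpow_mul,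
          one_div_mul_cancel hp0.ne', ENNReal.rpow_one, hL]
        ring
    _ ≤ 2 ^ (p - 1) * ((1 + L) * ∫⁻ u, ‖ψ u‖ₑ ^ p ∂ν + (1 + L) * J) := by
        gcongr
        · exact hA0.trans (le_mul_of_one_le_left zero_le le_self_add)
        · exact le_add_self
    _ = _ := by ring

/-- The diagonal estimate for a globally continuous `F`: the pointwise Sobolev bound for `F x ·`
at the point `x`, integrated over `x` with Tonelli's theorem. -/
theorem diagonal_lintegral_le {d : ℕ} {D : Set (EuclideanSpace ℝ (Fin d))}
    (hne : D.Nonempty) (hD : Bornology.IsBounded D) (hconv : Convex ℝ D) (hopen : IsOpen D)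
    {p q : ℝ} (hp : 1 ≤ p) (hq : 2 * d < q) :
    ∃ C : ℝ≥0∞, C ≠ ∞ ∧ ∀ F : EuclideanSpace ℝ (Fin d) → EuclideanSpace ℝ (Fin d) → ℝ,
      Continuous (Function.uncurry F) → ∀ M : ℝ≥0∞,
      (∀ y ∈ D, ∫⁻ x in D, ‖F x y‖ₑ ^ p ≤ M) →
      (∀ y ∈ D, ∀ y' ∈ D, y ≠ y' → ∫⁻ x in D, ‖F x y - F x y'‖ₑ ^ p ≤ M * edist y y' ^ q) →
      ∫⁻ x in D, ‖F x x‖ₑ ^ p ≤ C * M := by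
  obtain ⟨C, hC, h⟩ := enorm_rpow_le_of_continuous hne hD hconv hopen hp hq
  have hp0 : 0 < p := by linarith
  have hq0 : 0 < q := lt_of_le_of_lt (by positivity) hq
  have : IsProbabilityMeasure (ProbabilityTheory.cond volume D) :=
    ProbabilityTheory.cond_isProbabilityMeasure_of_finite (hopen.measure_pos _ hne).ne'
      hD.measure_lt_top.ne
  have hmem : ∀ᵐ u ∂(ProbabilityTheory.cond volume D), u ∈ D :=
    ProbabilityTheory.ae_cond_mem hopen.measurableSet
  set ν := ProbabilityTheory.cond (volume : Measure (EuclideanSpace ℝ (Fin d))) D with hν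
  refine ⟨C * 2, ENNReal.mul_ne_top hC (by norm_num), fun F hF M h1 h2 => ?_⟩
  have hm1 : Measurable fun z : EuclideanSpace ℝ (Fin d) × EuclideanSpace ℝ (Fin d) =>
      ‖F z.1 z.2‖ₑ ^ p := hF.enorm.measurable.pow_const p
  have hm2 : Measurable fun z : EuclideanSpace ℝ (Fin d) × EuclideanSpace ℝ (Fin d) ×
      EuclideanSpace ℝ (Fin d) =>
      ‖F z.1 z.2.1 - F z.1 z.2.2‖ₑ ^ p / edist z.2.1 z.2.2 ^ q := by
    have c1 : Continuous fun z : EuclideanSpace ℝ (Fin d) × EuclideanSpace ℝ (Fin d) ×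
      EuclideanSpace ℝ (Fin d) => F z.1 z.2.1 - F z.1 z.2.2 :=
      (hF.comp (f := fun z : EuclideanSpace ℝ (Fin d) × EuclideanSpace ℝ (Fin d) ×
        EuclideanSpace ℝ (Fin d) => (z.1, z.2.1)) (by fun_prop)).sub
      (hF.comp (f := fun z : EuclideanSpace ℝ (Fin d) × EuclideanSpace ℝ (Fin d) ×
        EuclideanSpace ℝ (Fin d) => (z.1, z.2.2)) (by fun_prop))
    exact (c1.enorm.measurable.pow_const p).div
      ((measurable_snd.fst.edist measurable_snd.snd).pow_const q)
  have hI1 : ∫⁻ x in D, ∫⁻ u, ‖F x u‖ₑ ^ p ∂ν ≤ M := by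
    rw [lintegral_lintegral_swap hm1.aemeasurable]
    calc _ ≤ ∫⁻ _, M ∂ν := lintegral_mono_ae (by filter_upwards [hmem] with u hu using h1 u hu)
      _ = M := by simp
  have hI2 : ∫⁻ x in D, ∫⁻ u, ∫⁻ v, ‖F x u - F x v‖ₑ ^ p / edist u v ^ q ∂ν ∂ν ≤ M := by
    rw [lintegral_congr fun x => (lintegral_prod (μ := ν) (ν := ν)
      (fun z => ‖F x z.1 - F x z.2‖ₑ ^ p / edist z.1 z.2 ^ q)
      (hm2.comp measurable_prodMk_left).aemeasurable).symm,
      lintegral_lintegral_swap hm2.aemeasurable]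
    have hmem2 : ∀ᵐ z ∂(ν.prod ν), z.1 ∈ D ∧ z.2 ∈ D :=
      (Measure.quasiMeasurePreserving_fst.ae hmem).and
        (Measure.quasiMeasurePreserving_snd.ae hmem)
    calc _ ≤ ∫⁻ _, M ∂(ν.prod ν) := by
          refine lintegral_mono_ae ?_
          filter_upwards [hmem2] with z hz
          rcases eq_or_ne z.1 z.2 with e | e
          · simp [e, hp0]
          · have h0 : edist z.1 z.2 ^ q ≠ 0 := by
              simp [ENNReal.rpow_eq_zero_iff, e, hq0]
            simp_rw [div_eq_mul_inv]
            rw [lintegral_mul_const' _ _ (ENNReal.inv_ne_top.2 h0), ← div_eq_mul_inv]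
            exact ENNReal.div_le_of_le_mul (h2 _ hz.1 _ hz.2 e)
      _ = M := by simp
  calc ∫⁻ x in D, ‖F x x‖ₑ ^ p
      ≤ ∫⁻ x in D, C * (∫⁻ u, ‖F x u‖ₑ ^ p ∂ν +
          ∫⁻ u, ∫⁻ v, ‖F x u - F x v‖ₑ ^ p / edist u v ^ q ∂ν ∂ν) :=
        setLIntegral_mono' hopen.measurableSet fun x hx =>
          h (F x) (hF.comp (Continuous.prodMk_right x)) x hx
    _ = C * ((∫⁻ x in D, ∫⁻ u, ‖F x u‖ₑ ^ p ∂ν) +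
          ∫⁻ x in D, ∫⁻ u, ∫⁻ v, ‖F x u - F x v‖ₑ ^ p / edist u v ^ q ∂ν ∂ν) := by
        rw [lintegral_const_mul' _ _ hC, lintegral_add_left hm1.lintegral_prod_right']
    _ ≤ C * (M + M) := by gcongr
    _ = C * 2 * M := by ring

/-- For `φ` continuous on the compact closure of `D`, the Bochner integral defining the `Lᵖ(D)`
norm is a genuine one, so norm bounds may be read as bounds on Lebesgue integrals. -/
theorem integral_rpow_le_iff_s7 {d : ℕ} {D : Set (EuclideanSpace ℝ (Fin d))}
    (hD : Bornology.IsBounded D) {p a : ℝ} (hp : 0 < p) (ha : 0 ≤ a)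
    {φ : EuclideanSpace ℝ (Fin d) → ℝ} (hφ : ContinuousOn φ (closure D)) :
    (∫ x in D, |φ x| ^ p) ^ (1 / p) ≤ a ↔ ∫⁻ x in D, ‖φ x‖ₑ ^ p ≤ ENNReal.ofReal (a ^ p) := by
  have hint : IntegrableOn (fun x => |φ x| ^ p) D :=
    (ContinuousOn.integrableOn_compact hD.isCompact_closure
      (hφ.abs.rpow_const fun _ _ => Or.inr hp.le)).mono_set subset_closure
  have hnn : 0 ≤ ∫ x in D, |φ x| ^ p := integral_nonneg fun x => by positivity
  have e : ∫⁻ x in D, ‖φ x‖ₑ ^ p = ENNReal.ofReal (∫ x in D, |φ x| ^ p) := by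
    rw [ofReal_integral_eq_lintegral_ofReal hint
      (Filter.Eventually.of_forall fun x => by positivity)]
    refine lintegral_congr fun x => ?_
    rw [← ENNReal.ofReal_rpow_of_nonneg (abs_nonneg _) hp.le, Real.enorm_eq_ofReal_abs]
  rw [e, ENNReal.ofReal_le_ofReal_iff (by positivity), one_div,
    Real.rpow_inv_le_iff_of_pos hnn ha hp]

/-- The diagonal estimate for functions of two variables, in terms of real integrals and for `F`
continuous only on `closure D ×ˢ closure D`. -/
theorem diagonal_integral_le {d : ℕ} {D : Set (EuclideanSpace ℝ (Fin d))}
    (hne : D.Nonempty) (hD : Bornology.IsBounded D) (hconv : Convex ℝ D) (hopen : IsOpen D)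
    {γ p : ℝ} (hp : 1 ≤ p) (hq : 2 * d < γ * p) :
    ∃ C > 0, ∀ (F : EuclideanSpace ℝ (Fin d) → EuclideanSpace ℝ (Fin d) → ℝ) (N : ℝ), 0 ≤ N →
      ContinuousOn (Function.uncurry F) (closure D ×ˢ closure D) →
      (∀ y ∈ closure D, (∫ x in D, |F x y| ^ p) ^ (1 / p) ≤ N) →
      (∀ y ∈ closure D, ∀ h : EuclideanSpace ℝ (Fin d), h ≠ 0 → y + h ∈ closure D →
        (∫ x in D, |F x (y + h) - F x y| ^ p) ^ (1 / p) ≤ N * ‖h‖ ^ γ) →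
      (∫ x in D, |F x x| ^ p) ^ (1 / p) ≤ C * N := by
  obtain ⟨C, hC, h⟩ := diagonal_lintegral_le hne hD hconv hopen hp hq
  have hp0 : 0 < p := by linarith
  refine ⟨(C.toReal + 1) ^ (1 / p), by positivity, fun F N hN hF h1 h2 => ?_⟩
  -- A Tietze extension `G` of `F` avoids all measurability questions off `closure D`.
  obtain ⟨G, hG⟩ := ContinuousMap.exists_restrict_eq (isClosed_closure.prod isClosed_closure)
    ⟨_, hF.domRestrict⟩
  have hGF : ∀ x ∈ closure D, ∀ y ∈ closure D, G (x, y) = F x y := fun x hx y hy =>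
    congrArg (fun g => g ⟨(x, y), hx, hy⟩) hG
  have hFc : ∀ y ∈ closure D, ContinuousOn (fun x => F x y) (closure D) := fun y hy =>
    hF.comp (f := fun x => (x, y)) (by fun_prop) fun x hx => ⟨hx, hy⟩
  have hFd : ContinuousOn (fun x => F x x) (closure D) :=
    hF.comp (f := fun x => (x, x)) (by fun_prop) fun x hx => ⟨hx, hx⟩
  have hDm := hopen.measurableSet
  have hsub : ∀ x ∈ D, x ∈ closure D := fun x hx => subset_closure hx
  have key := h (fun x y => G (x, y)) G.continuous (ENNReal.ofReal (N ^ p))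
    (fun y hy => by
      rw [setLIntegral_congr_fun hDm fun x hx => by
        rw [hGF x (hsub x hx) y (hsub y hy)]]
      exact (integral_rpow_le_iff_s7 hD hp0 hN (hFc y (hsub y hy))).1 (h1 y (hsub y hy)))
    (fun y hy y' hy' hne' => by
      rw [setLIntegral_congr_fun hDm fun x hx => by
        rw [hGF x (hsub x hx) y (hsub y hy), hGF x (hsub x hx) y' (hsub y' hy')]]
      have e : y' + (y - y') = y := by abel
      have := h2 y' (hsub y' hy') (y - y') (sub_ne_zero.2 hne') (by rw [e]; exact hsub y hy)
      rw [e, integral_rpow_le_iff_s7 hD hp0 (by positivity) (φ := fun x => F x y - F x y')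
        ((hFc y (hsub y hy)).sub (hFc y' (hsub y' hy')))] at this
      refine this.trans_eq ?_
      rw [Real.mul_rpow hN (by positivity), ENNReal.ofReal_mul (by positivity),
        ← Real.rpow_mul (norm_nonneg _), edist_eq_enorm_sub, ← ofReal_norm,
        ENNReal.ofReal_rpow_of_pos (norm_pos_iff.2 (sub_ne_zero.2 hne'))])
  rw [integral_rpow_le_iff_s7 hD hp0 (by positivity) hFd]
  rw [setLIntegral_congr_fun hDm fun x hx => by rw [hGF x (hsub x hx) x (hsub x hx)]] at key
  refine key.trans ?_
  rw [Real.mul_rpow (by positivity) hN, ← Real.rpow_mul (by positivity),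
    one_div_mul_cancel hp0.ne', Real.rpow_one, ENNReal.ofReal_mul (by positivity)]
  gcongr
  rw [ENNReal.le_ofReal_iff_toReal_le hC (by positivity)]
  linarith

/-- partial diagonal trace. For nonempty bounded convex open `D ⊂ ℝ^d`,
`0 < γ ≤ 1`, `p > 2d/γ`, there is `C > 0` (depending only on `d, p, γ, D`) such that
for every continuous `f : K × K × K → ℝ` with mixed `L^p(D)`-valued Hölder norm `≤ N`,
the partial diagonal trace `g(x,y2) = f(x,x,y2)` is an `L^p(D)`-valued `γ`-Hölder
function of `y2`, with sup norm and Hölder seminorm both bounded by `C·N`. -/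
theorem stmt_7 {d : ℕ} (D : Set (EuclideanSpace ℝ (Fin d)))
    (hne : D.Nonempty) (hD : Bornology.IsBounded D) (hconv : Convex ℝ D)
    (hopen : IsOpen D)
    (γ p : ℝ) (hγ0 : 0 < γ) (hγ1 : γ ≤ 1) (hp : 2 * d / γ < p) :
    ∃ C > 0,
      ∀ (f : EuclideanSpace ℝ (Fin d) → EuclideanSpace ℝ (Fin d) →
          EuclideanSpace ℝ (Fin d) → ℝ) (N : ℝ),
      ContinuousOn
        (fun z : EuclideanSpace ℝ (Fin d) × EuclideanSpace ℝ (Fin d) ×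
            EuclideanSpace ℝ (Fin d) => f z.1 z.2.1 z.2.2)
        (closure D ×ˢ closure D ×ˢ closure D) →
      (∀ y1 ∈ closure D, ∀ y2 ∈ closure D,
        (∫ x in D, |f x y1 y2| ^ p) ^ (1 / p) ≤ N) →
      (∀ y1 ∈ closure D, ∀ y2 ∈ closure D,
        ∀ h1 : EuclideanSpace ℝ (Fin d), h1 ≠ 0 → y1 + h1 ∈ closure D →
        (∫ x in D, |f x (y1 + h1) y2 - f x y1 y2| ^ p) ^ (1 / p) ≤ N * ‖h1‖ ^ γ) →
      (∀ y1 ∈ closure D, ∀ y2 ∈ closure D,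
        ∀ h2 : EuclideanSpace ℝ (Fin d), h2 ≠ 0 → y2 + h2 ∈ closure D →
        (∫ x in D, |f x y1 (y2 + h2) - f x y1 y2| ^ p) ^ (1 / p) ≤ N * ‖h2‖ ^ γ) →
      (∀ y1 ∈ closure D, ∀ y2 ∈ closure D,
        ∀ h1 h2 : EuclideanSpace ℝ (Fin d), h1 ≠ 0 → h2 ≠ 0 →
        y1 + h1 ∈ closure D → y2 + h2 ∈ closure D →
        (∫ x in D, |f x (y1 + h1) (y2 + h2) - f x (y1 + h1) y2
            - f x y1 (y2 + h2) + f x y1 y2| ^ p) ^ (1 / p)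
          ≤ N * (‖h1‖ ^ γ * ‖h2‖ ^ γ)) →
      (∀ y2 ∈ closure D, (∫ x in D, |f x x y2| ^ p) ^ (1 / p) ≤ C * N) ∧
      (∀ y2 ∈ closure D, ∀ h : EuclideanSpace ℝ (Fin d), h ≠ 0 →
        y2 + h ∈ closure D →
        (∫ x in D, |f x x (y2 + h) - f x x y2| ^ p) ^ (1 / p) ≤ C * N * ‖h‖ ^ γ) := by
  rcases Nat.eq_zero_or_pos d with rfl | hd
  · -- In dimension zero there is only one point, so the diagonal imposes no condition.
    refine ⟨1, one_pos, fun f N _ h1 _ _ _ => ⟨fun y2 hy2 => ?_, fun y2 _ h hh => ?_⟩⟩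
    · rw [one_mul]
      convert h1 y2 hy2 y2 hy2 using 7 with x
      exact Subsingleton.elim _ _
    · exact absurd (Subsingleton.elim h 0) hh
  have hq : 2 * d < γ * p := by rwa [div_lt_iff₀ hγ0, mul_comm p] at hp
  have hd1 : (1 : ℝ) ≤ d := by exact_mod_cast hd
  have hp1 : 1 ≤ p := by
    by_contra! hlt
    nlinarith
  obtain ⟨C, hC, key⟩ := diagonal_integral_le hne hD hconv hopen hp1 hq
  refine ⟨C, hC, fun f N hf h1 h2 h3 h4 => ?_⟩
  obtain ⟨x₀, hx₀⟩ := hne.closure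
  have hN : 0 ≤ N := le_trans (Real.rpow_nonneg
    (integral_nonneg fun x => by positivity) _) (h1 x₀ hx₀ x₀ hx₀)
  have hslice : ∀ y2 ∈ closure D, ContinuousOn
      (Function.uncurry fun x y1 => f x y1 y2) (closure D ×ˢ closure D) := fun y2 hy2 =>
    hf.comp (f := fun z : EuclideanSpace ℝ (Fin d) × EuclideanSpace ℝ (Fin d) => (z.1, z.2, y2))
      (by fun_prop) fun z hz => ⟨hz.1, hz.2, hy2⟩
  refine ⟨fun y2 hy2 => key (fun x y1 => f x y1 y2) N hN (hslice y2 hy2)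
    (fun y1 hy1 => h1 y1 hy1 y2 hy2) (fun y1 hy1 h hh hy => h2 y1 hy1 y2 hy2 h hh hy),
    fun y2 hy2 h hh hy => ?_⟩
  rw [mul_assoc]
  refine key (fun x y1 => f x y1 (y2 + h) - f x y1 y2) (N * ‖h‖ ^ γ) (by positivity)
    ((hslice _ hy).sub (hslice _ hy2)) (fun y1 hy1 => h3 y1 hy1 y2 hy2 h hh hy)
    (fun y1 hy1 h' hh' hy' => ?_)
  have := h4 y1 hy1 y2 hy2 h' h hh' hh hy' hy
  rw [mul_assoc, mul_comm (‖h‖ ^ γ)]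
  convert this using 6 with x
  ring
end

section
/- Let (Ω, F, ℙ) be a probability space, let K ⊂ ℝ^d be compact, let 0 < γ ≤ 1 and let k ≥ 1 be an integer. Let Y : Ω × K → ℝ be jointly measurable, with each sample path Y(ω,·) continuous and γ-Hölder, and set M(ω) := max( sup_{y∈K} |Y(ω,y)| , sup_{y≠y'∈K} |Y(ω,y)−Y(ω,y')|/‖y−y'‖^γ ) (the C^{0,γ}(K) norm of the sample path); assume E[M^k] < ∞. Define the k-point correlation C_k(y_1,…,y_k) := E[ ∏_{i=1}^k Y(·,y_i) ]. Then for every nonempty subset T ⊆ {1,…,k}, every y ∈ K^k and every increment vector h = (h_1,…,h_k) ∈ (ℝ^d)^k with h_i ≠ 0 for i ∈ T, h_i = 0 for i ∉ T, and y + h ∈ K^k, the mixed difference satisfies | Δ_T^h C_k(y) | ≤ E[M^k] · ∏_{i∈T} ‖h_i‖^γ. Consequently C_k belongs to the mixed Hölder space C^{0,γ,mix}(K^k) with ‖C_k‖_{γ,mix} ≤ E[M^k] = ‖Y‖^k_{L^k(Ω; C^{0,γ}(K))}. -/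
open MeasureTheory Finset

/-!
For fixed `ω` the mixed difference of the tensor product `∏ i, Y ω (y i)` factorizes
(`mixed_diff_prod`): coordinates in `T` contribute one-dimensional increments, the others plain
values. Each increment is at most `M ω * ‖h i‖ ^ γ` and each value at most `M ω`, so the mixed
difference is at most `M ω ^ k * ∏ i ∈ T, ‖h i‖ ^ γ`. Since every product of `k` values of `Y ω` on
`K` is dominated by the integrable `M ω ^ k`, the alternating sum may be exchanged with the
expectation, and the pointwise bound integrates to the claim.
-/

/-- The mixed difference of a product is the product of the one-dimensional increments `b i - a i`
over `T` and the values `a i` off `T`. -/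
lemma mixed_diff_prod {ι : Type*} [Fintype ι] [DecidableEq ι] (T : Finset ι) (a b : ι → ℝ) :
    ∑ S ∈ T.powerset, (-1 : ℝ) ^ (T.card - S.card) * ∏ i, (if i ∈ S then b i else a i)
      = (∏ i ∈ T, (b i - a i)) * ∏ i ∈ Tᶜ, a i := by
  simp_rw [sub_eq_add_neg]
  rw [Finset.prod_add, Finset.sum_mul]
  refine Finset.sum_congr rfl fun S hS => ?_
  have hST : S ⊆ T := Finset.mem_powerset.mp hS
  have h1 : ∏ i ∈ T, (if i ∈ S then b i else a i) = (∏ i ∈ S, b i) * ∏ i ∈ T \ S, a i := by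
    rw [← Finset.prod_sdiff hST, mul_comm]
    congr 1
    · exact Finset.prod_congr rfl fun i hi => if_pos hi
    · exact Finset.prod_congr rfl fun i hi => if_neg (Finset.mem_sdiff.mp hi).2
  have h2 : ∏ i ∈ Tᶜ, (if i ∈ S then b i else a i) = ∏ i ∈ Tᶜ, a i :=
    Finset.prod_congr rfl fun i hi => if_neg fun hiS => Finset.mem_compl.mp hi (hST hiS)
  rw [← Finset.prod_mul_prod_compl T, h1, h2, Finset.prod_neg, Finset.card_sdiff_of_subset hST]
  ring

/-- for a jointly measurable random field `Y` on a probability space,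
with continuous `γ`-Hölder sample paths on a compact `K` whose `C^{0,γ}(K)` norm is
bounded by `M(ω)` with `E[M^k] < ∞`, the `k`-point correlation
`C_k(y) = E[∏ Y(·,y_i)]` satisfies the mixed difference bound
`|Δ_T^h C_k(y)| ≤ E[M^k] ∏_{i∈T} ‖h_i‖^γ` and the sup bound `|C_k(y)| ≤ E[M^k]`;
i.e. `C_k ∈ C^{0,γ,mix}(K^k)` with `‖C_k‖_{γ,mix} ≤ E[M^k]`. -/
theorem stmt_10 {d : ℕ} {Ω : Type*} [MeasurableSpace Ω] (μ : Measure Ω)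
    [IsProbabilityMeasure μ]
    (K : Set (EuclideanSpace ℝ (Fin d))) (hK : IsCompact K)
    (γ : ℝ) (hγ0 : 0 < γ) (hγ1 : γ ≤ 1)
    (k : ℕ) (hk : 1 ≤ k)
    (Y : Ω → EuclideanSpace ℝ (Fin d) → ℝ)
    (hmeas : Measurable fun q : Ω × EuclideanSpace ℝ (Fin d) => Y q.1 q.2)
    (hcont : ∀ ω, ContinuousOn (Y ω) K)
    (M : Ω → ℝ)
    (hMsup : ∀ ω, ∀ y ∈ K, |Y ω y| ≤ M ω)
    (hMhold : ∀ ω, ∀ y ∈ K, ∀ y' ∈ K, |Y ω y - Y ω y'| ≤ M ω * ‖y - y'‖ ^ γ)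
    (hMint : Integrable (fun ω => M ω ^ k) μ) :
    (∀ T : Finset (Fin k), T.Nonempty →
      ∀ y h : Fin k → EuclideanSpace ℝ (Fin d),
      (∀ i, y i ∈ K) → (∀ i ∈ T, h i ≠ 0) → (∀ i ∉ T, h i = 0) →
      (∀ i, y i + h i ∈ K) →
      |∑ S ∈ T.powerset, (-1 : ℝ) ^ (T.card - S.card) *
          (∫ ω, ∏ i, Y ω (y i + if i ∈ S then h i else 0) ∂μ)|
        ≤ (∫ ω, M ω ^ k ∂μ) * ∏ i ∈ T, ‖h i‖ ^ γ) ∧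
    (∀ y : Fin k → EuclideanSpace ℝ (Fin d), (∀ i, y i ∈ K) →
      |∫ ω, ∏ i, Y ω (y i) ∂μ| ≤ ∫ ω, M ω ^ k ∂μ) := by
  have hprod : ∀ z : Fin k → EuclideanSpace ℝ (Fin d), (∀ i, z i ∈ K) →
      ∀ ω, |∏ i, Y ω (z i)| ≤ M ω ^ k := by
    intro z hz ω
    rw [Finset.abs_prod]
    calc ∏ i, |Y ω (z i)| ≤ ∏ _i : Fin k, M ω :=
          Finset.prod_le_prod (fun i _ => abs_nonneg _) fun i _ => hMsup ω _ (hz i)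
      _ = M ω ^ k := by simp
  have hint : ∀ z : Fin k → EuclideanSpace ℝ (Fin d), (∀ i, z i ∈ K) →
      Integrable (fun ω => ∏ i, Y ω (z i)) μ := by
    intro z hz
    have hm : Measurable fun ω => ∏ i, Y ω (z i) :=
      Finset.measurable_fun_prod _ fun i _ => hmeas.comp (measurable_id.prodMk measurable_const)
    exact hMint.mono' hm.aestronglyMeasurable (Filter.Eventually.of_forall (hprod z hz))
  refine ⟨?_, fun y hy => ?_⟩
  · intro T _ y h hy _ _ hyh
    have hz : ∀ (S : Finset (Fin k)) (i : Fin k), (y i + if i ∈ S then h i else 0) ∈ K := by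
      intro S i
      split_ifs
      · exact hyh i
      · simpa using hy i
    rw [← integral_mul_const]
    simp_rw [← integral_const_mul]
    rw [← integral_finsetSum _ fun S _ => (hint _ (hz S)).const_mul _]
    rw [← Real.norm_eq_abs]
    refine norm_integral_le_of_norm_le (hMint.mul_const _) (Filter.Eventually.of_forall fun ω => ?_)
    have hsplit : ∀ (S : Finset (Fin k)) (i : Fin k), Y ω (y i + if i ∈ S then h i else 0)
        = if i ∈ S then Y ω (y i + h i) else Y ω (y i) := by
      intro S i
      split_ifs <;> simp
    simp_rw [hsplit]
    rw [mixed_diff_prod T (fun i => Y ω (y i)) fun i => Y ω (y i + h i), Real.norm_eq_abs, abs_mul,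
      Finset.abs_prod, Finset.abs_prod]
    have hT : ∏ i ∈ T, |Y ω (y i + h i) - Y ω (y i)| ≤ ∏ i ∈ T, (M ω * ‖h i‖ ^ γ) :=
      Finset.prod_le_prod (fun i _ => abs_nonneg _) fun i _ => by
        simpa using hMhold ω _ (hyh i) _ (hy i)
    have hTc : ∏ i ∈ Tᶜ, |Y ω (y i)| ≤ ∏ _i ∈ Tᶜ, M ω :=
      Finset.prod_le_prod (fun i _ => abs_nonneg _) fun i _ => hMsup ω _ (hy i)
    calc _ ≤ (∏ i ∈ T, (M ω * ‖h i‖ ^ γ)) * ∏ _i ∈ Tᶜ, M ω :=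
          mul_le_mul hT hTc (Finset.prod_nonneg fun i _ => abs_nonneg _)
            ((Finset.prod_nonneg fun i _ => abs_nonneg _).trans hT)
      _ = ((∏ _i ∈ T, M ω) * ∏ _i ∈ Tᶜ, M ω) * ∏ i ∈ T, ‖h i‖ ^ γ := by
          rw [Finset.prod_mul_distrib]; ring
      _ = M ω ^ k * ∏ i ∈ T, ‖h i‖ ^ γ := by
          rw [Finset.prod_mul_prod_compl]; simp
  · rw [← Real.norm_eq_abs]
    exact norm_integral_le_of_norm_le hMint (Filter.Eventually.of_forall (hprod y hy))
end

section
/- Let s > 0, 0 < τ < 1, let k ≥ 1 and L ≥ 0 be integers. Then the tail of the k-dimensional geometric sum satisfies ∑_{ℓ ∈ ℕ^k, |ℓ| > L} 2^{−s|ℓ|} ≤ (1 − 2^{−sτ})^{−k} · 2^{−L s (1−τ)}, where |ℓ| = ℓ_1 + ⋯ + ℓ_k. -/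
/-!
On the tail `|ℓ| > L`, split `2^{-s|ℓ|} = 2^{-s(1-τ)|ℓ|} · 2^{-sτ|ℓ|}`. The first factor is at most
`2^{-Ls(1-τ)}`, and with `r = 2^{-sτ} < 1` the second is `∏ i, r ^ ℓ i`, whose sum over all of `ℕ^k`
is the `k`-th power of a geometric series. Since all terms are nonnegative, it suffices to bound
finite partial sums (`sum_prod_pow_le`), which avoids any discussion of summability over `ℕ^k`.
-/

/-- Every finite partial sum of the `k`-dimensional geometric series is at most `(1 - r)^{-k}`: the
index set lies in a cube `{0, …, N - 1}^k`, over which the sum factors. -/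
theorem sum_prod_pow_le {r : ℝ} (h0 : 0 ≤ r) (h1 : r < 1) {k : ℕ} (u : Finset (Fin k → ℕ)) :
    ∑ ℓ ∈ u, ∏ i, r ^ ℓ i ≤ ((1 - r)⁻¹) ^ k := by
  classical
  let N := u.sup (fun ℓ => ∑ i, ℓ i) + 1
  have hu : u ⊆ Fintype.piFinset (fun _ : Fin k => Finset.range N) := by
    intro ℓ hℓ
    rw [Fintype.mem_piFinset]
    intro i
    have ha : ℓ i ≤ ∑ i, ℓ i :=
      Finset.single_le_sum (f := ℓ) (fun _ _ => Nat.zero_le _) (Finset.mem_univ i)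
    have hb : ∑ i, ℓ i ≤ u.sup (fun ℓ => ∑ i, ℓ i) :=
      Finset.le_sup (f := fun ℓ : Fin k → ℕ => ∑ i, ℓ i) hℓ
    exact Finset.mem_range.2 (Nat.lt_succ_of_le (ha.trans hb))
  calc ∑ ℓ ∈ u, ∏ i, r ^ ℓ i
      ≤ ∑ ℓ ∈ Fintype.piFinset (fun _ : Fin k => Finset.range N), ∏ i, r ^ ℓ i :=
        Finset.sum_le_sum_of_subset_of_nonneg hu fun _ _ _ => by positivity
    _ = (∑ j ∈ Finset.range N, r ^ j) ^ k := by
        rw [← Finset.prod_univ_sum (fun _ : Fin k => Finset.range N) (fun _ j => r ^ j)]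
        simp
    _ ≤ ((1 - r)⁻¹) ^ k := by
        gcongr
        rw [← tsum_geometric_of_lt_one h0 h1]
        exact (summable_geometric_of_lt_one h0 h1).sum_le_tsum _ fun _ _ => by positivity

/-- tail bound for the `k`-dimensional geometric sum:
`∑_{ℓ ∈ ℕ^k, |ℓ| > L} 2^{−s|ℓ|} ≤ (1 − 2^{−sτ})^{−k} · 2^{−Ls(1−τ)}`. -/
theorem stmt_12 (s τ : ℝ) (hs : 0 < s) (hτ0 : 0 < τ) (hτ1 : τ < 1)
    (k L : ℕ) (hk : 1 ≤ k) :
    ∑' ℓ : {ℓ : Fin k → ℕ // L < ∑ i, ℓ i},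
        (2 : ℝ) ^ (-(s * ∑ i, ((ℓ : Fin k → ℕ) i : ℝ)))
      ≤ ((1 - (2 : ℝ) ^ (-(s * τ)))⁻¹) ^ k *
          (2 : ℝ) ^ (-((L : ℝ) * s * (1 - τ))) := by
  have h1 : (2 : ℝ) ^ (-(s * τ)) < 1 :=
    Real.rpow_lt_one_of_one_lt_of_neg one_lt_two (neg_lt_zero.2 (mul_pos hs hτ0))
  have hterm : ∀ ℓ : {ℓ : Fin k → ℕ // L < ∑ i, ℓ i},
      (2 : ℝ) ^ (-(s * ∑ i, ((ℓ : Fin k → ℕ) i : ℝ))) ≤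
        (∏ i, ((2 : ℝ) ^ (-(s * τ))) ^ (ℓ : Fin k → ℕ) i) *
          (2 : ℝ) ^ (-((L : ℝ) * s * (1 - τ))) := by
    rintro ⟨ℓ, hℓ⟩
    have hL : (L : ℝ) ≤ ∑ i, (ℓ i : ℝ) := by exact_mod_cast hℓ.le
    have hmul := mul_le_mul_of_nonneg_right hL (mul_nonneg hs.le (sub_nonneg.2 hτ1.le))
    rw [Finset.prod_pow_eq_pow_sum, ← Real.rpow_natCast, ← Real.rpow_mul zero_le_two,
      ← Real.rpow_add two_pos]
    apply Real.rpow_le_rpow_of_exponent_le one_le_two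
    push_cast
    linarith
  refine Real.tsum_le_of_sum_le (fun _ => by positivity) fun u => ?_
  refine (Finset.sum_le_sum fun ℓ _ => hterm ℓ).trans ?_
  rw [← Finset.sum_mul]
  gcongr
  simpa using sum_prod_pow_le (by positivity) h1 (u.map (Function.Embedding.subtype _))
end

section
/- Let X be a Banach space, let k ≥ 1 be an integer, s > 0 and A ≥ 0, and let d : ℕ^k → X be a family satisfying ‖d_ℓ‖ ≤ A · 2^{−s|ℓ|} for every multi-index ℓ ∈ ℕ^k, where |ℓ| = ℓ_1 + ⋯ + ℓ_k. Then the family (d_ℓ)_{ℓ∈ℕ^k} is summable, and its sum u := ∑_{ℓ∈ℕ^k} d_ℓ satisfies, for every integer L ≥ 0 and every τ ∈ (0,1), the sparse truncation error bound ‖ u − ∑_{ℓ∈ℕ^k, |ℓ| ≤ L} d_ℓ ‖ ≤ A · (1 − 2^{−sτ})^{−k} · 2^{−L s (1−τ)}. (This is the abstract form of the convergence estimate for the Smolyak sparse interpolation operator S_L = ∑_{|ℓ|≤L} ⊗_{j=1}^k Δ_{ℓ_j}, whose hierarchical details Δ_{ℓ_1}⊗⋯⊗Δ_{ℓ_k}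 u decay like 2^{−s|ℓ|}.) -/
/-!
Write `|ℓ| = ∑ i, ℓ i`. Finite sums of `q ^ |ℓ|` over `ℕ^k` with `0 ≤ q < 1` are at most
`(1 - q)⁻¹ ^ k`, since they are dominated by a sum over a box, which factors into `k` geometric
sums (`sum_pow_length_le`). With `q = 2 ^ (-s)` this gives summability. For the error estimate,
indices outside the truncation set have `|ℓ| > L`, so that
`2 ^ (-s|ℓ|) ≤ 2 ^ (-L s (1 - τ)) * (2 ^ (-s τ)) ^ |ℓ|`, and the bound with `q = 2 ^ (-s τ)` applies
to every finite part of the tail; the error is the limit of such finite parts.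
-/

open Finset

lemma sum_pow_length_le {k : ℕ} {q : ℝ} (hq0 : 0 ≤ q) (hq1 : q < 1)
    (T : Finset (Fin k → ℕ)) :
    ∑ ℓ ∈ T, q ^ (∑ i, ℓ i) ≤ ((1 - q)⁻¹) ^ k := by
  -- `N` bounds every length `|ℓ|`, hence every coordinate, of an element of `T`.
  let N := T.sup (fun ℓ => ∑ i, ℓ i)
  have hsub : T ⊆ Fintype.piFinset fun _ : Fin k => Finset.range (N + 1) := by
    intro ℓ hℓ
    rw [Fintype.mem_piFinset]
    intro i
    have h1 : ℓ i ≤ ∑ i, ℓ i :=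
      Finset.single_le_sum (f := ℓ) (fun _ _ => Nat.zero_le _) (Finset.mem_univ i)
    have h2 : ∑ i, ℓ i ≤ N := Finset.le_sup (f := fun ℓ : Fin k → ℕ => ∑ i, ℓ i) hℓ
    exact Finset.mem_range.2 (by lia)
  calc ∑ ℓ ∈ T, q ^ (∑ i, ℓ i)
      ≤ ∑ ℓ ∈ Fintype.piFinset fun _ : Fin k => Finset.range (N + 1), q ^ (∑ i, ℓ i) :=
        Finset.sum_le_sum_of_subset_of_nonneg hsub fun _ _ _ => pow_nonneg hq0 _
    _ = ∏ _i : Fin k, ∑ j ∈ Finset.range (N + 1), q ^ j := by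
        rw [← Finset.sum_prod_piFinset (Finset.range (N + 1)) (fun (_ : Fin k) j => q ^ j)]
        exact Finset.sum_congr rfl fun ℓ _ => (Finset.prod_pow_eq_pow_sum _ _ _).symm
    _ = (∑ j ∈ Finset.range (N + 1), q ^ j) ^ k := by simp
    _ ≤ ((1 - q)⁻¹) ^ k := by
        refine pow_le_pow_left₀ (Finset.sum_nonneg fun _ _ => pow_nonneg hq0 _) ?_ k
        rw [← tsum_geometric_of_lt_one hq0 hq1]
        exact (summable_geometric_of_lt_one hq0 hq1).sum_le_tsum _ fun _ _ => pow_nonneg hq0 _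

lemma two_rpow_neg_mul_length {k : ℕ} (c : ℝ) (ℓ : Fin k → ℕ) :
    (2 : ℝ) ^ (-(c * ∑ i, (ℓ i : ℝ))) = ((2 : ℝ) ^ (-c)) ^ (∑ i, ℓ i) := by
  rw [← Real.rpow_natCast, ← Real.rpow_mul (by norm_num)]
  push_cast
  ring_nf

lemma two_rpow_neg_lt_one {c : ℝ} (hc : 0 < c) : (2 : ℝ) ^ (-c) < 1 :=
  Real.rpow_lt_one_of_one_lt_of_neg (by norm_num) (by linarith)

/-- abstract Smolyak truncation estimate. If `‖f ℓ‖ ≤ A · 2^{−s|ℓ|}`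
for all multi-indices `ℓ ∈ ℕ^k`, then `f` is summable and, for every level `L` and
every `τ ∈ (0,1)`, the sparse truncation error satisfies
`‖∑' f − ∑_{|ℓ| ≤ L} f ℓ‖ ≤ A (1 − 2^{−sτ})^{−k} 2^{−Ls(1−τ)}`. -/
theorem stmt_13 {X : Type*} [NormedAddCommGroup X] [CompleteSpace X]
    (k : ℕ) (hk : 1 ≤ k) (s A : ℝ) (hs : 0 < s) (hA : 0 ≤ A)
    (f : (Fin k → ℕ) → X)
    (hf : ∀ ℓ : Fin k → ℕ, ‖f ℓ‖ ≤ A * (2 : ℝ) ^ (-(s * ∑ i, (ℓ i : ℝ)))) :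
    Summable f ∧
    ∀ (L : ℕ) (τ : ℝ), 0 < τ → τ < 1 →
      ‖(∑' ℓ, f ℓ) -
          ∑ ℓ ∈ (Fintype.piFinset fun _ : Fin k => Finset.range (L + 1)).filter
            (fun ℓ => ∑ i, ℓ i ≤ L), f ℓ‖
        ≤ A * ((1 - (2 : ℝ) ^ (-(s * τ)))⁻¹) ^ k *
            (2 : ℝ) ^ (-((L : ℝ) * s * (1 - τ))) := by
  have hsum : Summable f := by
    refine Summable.of_norm (summable_of_sum_le (c := A * ((1 - (2 : ℝ) ^ (-s))⁻¹) ^ k)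
      (fun _ => norm_nonneg _) fun T => ?_)
    calc ∑ ℓ ∈ T, ‖f ℓ‖ ≤ ∑ ℓ ∈ T, A * ((2 : ℝ) ^ (-s)) ^ (∑ i, ℓ i) :=
          Finset.sum_le_sum fun ℓ _ => (hf ℓ).trans_eq (by rw [two_rpow_neg_mul_length])
      _ ≤ _ := by
          rw [← Finset.mul_sum]
          exact mul_le_mul_of_nonneg_left
            (sum_pow_length_le (by positivity) (two_rpow_neg_lt_one hs) T) hA
  refine ⟨hsum, fun L τ hτ0 hτ1 => ?_⟩
  set F := (Fintype.piFinset fun _ : Fin k => Finset.range (L + 1)).filter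
    (fun ℓ => ∑ i, ℓ i ≤ L) with hF
  have hout : ∀ ℓ : Fin k → ℕ, ℓ ∉ F → L ≤ ∑ i, ℓ i := by
    intro ℓ hℓ
    by_contra! hlt
    refine hℓ (Finset.mem_filter.2 ⟨Fintype.mem_piFinset.2 fun i => ?_, hlt.le⟩)
    have h1 : ℓ i ≤ ∑ i, ℓ i :=
      Finset.single_le_sum (f := ℓ) (fun _ _ => Nat.zero_le _) (Finset.mem_univ i)
    exact Finset.mem_range.2 (by lia)
  have hterm : ∀ ℓ : Fin k → ℕ, ℓ ∉ F → ‖f ℓ‖ ≤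
      A * (2 : ℝ) ^ (-((L : ℝ) * s * (1 - τ))) * ((2 : ℝ) ^ (-(s * τ))) ^ (∑ i, ℓ i) := by
    intro ℓ hℓ
    refine (hf ℓ).trans ?_
    rw [← two_rpow_neg_mul_length, mul_assoc, ← Real.rpow_add (by norm_num)]
    refine mul_le_mul_of_nonneg_left (Real.rpow_le_rpow_of_exponent_le (by norm_num) ?_) hA
    have h : (L : ℝ) ≤ ∑ i, (ℓ i : ℝ) := by exact_mod_cast hout ℓ hℓ
    have hc : 0 ≤ s * (1 - τ) := mul_nonneg hs.le (by linarith)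
    nlinarith [mul_le_mul_of_nonneg_left h hc]
  refine le_of_tendsto ((Filter.Tendsto.sub_const hsum.hasSum (∑ ℓ ∈ F, f ℓ)).norm) ?_
  filter_upwards [Filter.eventually_ge_atTop F] with T hT
  rw [← Finset.sum_sdiff hT, add_sub_cancel_right]
  calc ‖∑ ℓ ∈ T \ F, f ℓ‖
      ≤ ∑ ℓ ∈ T \ F, A * (2 : ℝ) ^ (-((L : ℝ) * s * (1 - τ))) *
          ((2 : ℝ) ^ (-(s * τ))) ^ (∑ i, ℓ i) :=
        norm_sum_le_of_le _ fun ℓ hℓ => hterm ℓ (Finset.mem_sdiff.1 hℓ).2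
    _ ≤ A * (2 : ℝ) ^ (-((L : ℝ) * s * (1 - τ))) * ((1 - (2 : ℝ) ^ (-(s * τ)))⁻¹) ^ k := by
        rw [← Finset.mul_sum]
        exact mul_le_mul_of_nonneg_left
          (sum_pow_length_le (by positivity) (two_rpow_neg_lt_one (mul_pos hs hτ0)) _)
          (by positivity)
    _ = _ := by ring
end
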